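/- Let α, β ≥ −1/2 and let i, j ≥ 0 be real numbers. Define k_n^{(α,β),i,j}(cos θ, cos φ) := (sin(θ/2) sin(φ/2))^i (cos(θ/2) cos(φ/2))^j · k_n^{(α+i,β+j)}(cos θ, cos φ). Then there exists a constant c > 0, depending only on α, β, i, j, such that for all integers n ≥ 1 and all θ, φ ∈ [0,π]: |k_n^{(α,β),i,j}(cos θ, cos φ)| ≤ c · (sin(θ/2) sin(φ/2) + n^{−1}|θ−φ| + n^{−2})^{−α−1/2} · (cos(θ/2) cos(φ/2) + n^{−1}|θ−φ| + n^{−2})^{−β−1/2} / (|θ−φ| + n^{−1}). -/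

import Mathlib

open MeasureTheory Real Set Filter
open scoped ENNReal

noncomputable section

/-- The parabolic-type domain `Ω`, the image of the triangle `-1 < x < y < 1`
under `(x, y) ↦ (x + y, x y)`. -/
def omegaDom : Set (ℝ × ℝ) :=
  {q | ∃ x y : ℝ, -1 < x ∧ x < y ∧ y < 1 ∧ q = (x + y, x * y)}

/-- The square `[-1,1]²`. -/
def sqDom : Set (ℝ × ℝ) := Icc (-1 : ℝ) 1 ×ˢ Icc (-1 : ℝ) 1

/-- The open triangle `-1 < x < y < 1`. -/
def triDom : Set (ℝ × ℝ) := {q | -1 < q.1 ∧ q.1 < q.2 ∧ q.2 < 1}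

/-- The smaller root `x(u,v)` of `t² - u t + v = 0`. -/
def xRoot (q : ℝ × ℝ) : ℝ := (q.1 - Real.sqrt (q.1 ^ 2 - 4 * q.2)) / 2

/-- The larger root `y(u,v)` of `t² - u t + v = 0`. -/
def yRoot (q : ℝ × ℝ) : ℝ := (q.1 + Real.sqrt (q.1 ^ 2 - 4 * q.2)) / 2

/-- Evaluation of a two-variable polynomial at a point of `ℝ²`. -/
def evalP (P : MvPolynomial (Fin 2) ℝ) (q : ℝ × ℝ) : ℝ :=
  MvPolynomial.eval ![q.1, q.2] P

/-- The space `V_n(W)` of orthogonal polynomials of degree `n` for the weight `W`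
on the domain `D`: polynomials of exact total degree `n` orthogonal to all
polynomials of lower degree. -/
def Vpoly (D : Set (ℝ × ℝ)) (W : ℝ × ℝ → ℝ) (n : ℕ) : Set (MvPolynomial (Fin 2) ℝ) :=
  {P | P.totalDegree = n ∧ ∀ Q : MvPolynomial (Fin 2) ℝ, Q.totalDegree < n →
    (∫ q in D, evalP P q * evalP Q q * W q) = 0}

/-- `Q 0, …, Q n` is an orthonormal basis of `V_n(W)` on `D`. -/
def isONBVn (D : Set (ℝ × ℝ)) (W : ℝ × ℝ → ℝ) (n : ℕ)
    (Q : ℕ → MvPolynomial (Fin 2) ℝ) : Prop :=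
  (∀ k, k ≤ n → Q k ∈ Vpoly D W n) ∧
  (∀ k, k ≤ n → ∀ j, j ≤ n →
    (∫ q in D, evalP (Q k) q * evalP (Q j) q * W q) = if k = j then 1 else 0) ∧
  (∀ R ∈ Vpoly D W n, R ∈ Submodule.span ℝ (Q '' Set.Iic n))

/-- `K` is the reproducing kernel of `Π_n²` in `L²(W)` on the domain `D`:
it is a polynomial function, for each fixed `x ∈ D` it is a polynomial of total
degree `≤ n` in the second variable, and it reproduces every polynomial of total
degree `≤ n`. -/
def IsRK (D : Set (ℝ × ℝ)) (W : ℝ × ℝ → ℝ) (n : ℕ) (K : ℝ × ℝ → ℝ × ℝ → ℝ) : Prop :=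
  (∃ KP : MvPolynomial (Fin 4) ℝ,
    ∀ x y : ℝ × ℝ, K x y = MvPolynomial.eval ![x.1, x.2, y.1, y.2] KP) ∧
  (∀ x ∈ D, ∃ P : MvPolynomial (Fin 2) ℝ, P.totalDegree ≤ n ∧ ∀ y, K x y = evalP P y) ∧
  (∀ P : MvPolynomial (Fin 2) ℝ, P.totalDegree ≤ n →
    ∀ x ∈ D, (∫ y in D, K x y * evalP P y * W y) = evalP P x)

/-- `p` is the sequence of orthonormal polynomials with respect to the weight `w`
on `[-1,1]`: `p n` has degree exactly `n`, positive leading coefficient, and the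
`p n` are orthonormal in `L²(w)`. -/
def IsONPS (w : ℝ → ℝ) (p : ℕ → Polynomial ℝ) : Prop :=
  (∀ n, (p n).natDegree = n) ∧ (∀ n, 0 < (p n).leadingCoeff) ∧
  (∀ n m, (∫ x in Icc (-1:ℝ) 1, (p n).eval x * (p m).eval x * w x)
    = if n = m then 1 else 0)

/-- The Christoffel–Darboux kernel `k_n(x,y) = ∑_{j=0}^n p_j(x) p_j(y)`. -/
def CDK (p : ℕ → Polynomial ℝ) (n : ℕ) (x y : ℝ) : ℝ :=
  ∑ j ∈ Finset.range (n + 1), (p j).eval x * (p j).eval y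

/-- The Jacobi factor `J_{a,b}(x) = (1-x)^a (1+x)^b`. -/
def Jw (a b : ℝ) (x : ℝ) : ℝ := (1 - x) ^ a * (1 + x) ^ b

/-- The factor `J*_{a,b}(u,v) = (1-u+v)^a (1+u+v)^b` on `Ω`. -/
def JstarW (a b : ℝ) (q : ℝ × ℝ) : ℝ := (1 - q.1 + q.2) ^ a * (1 + q.1 + q.2) ^ b

/-- Modulus of continuity of `ψ` on `[-1,1]`. -/
def modCont (ψ : ℝ → ℝ) (t : ℝ) : ℝ :=
  sSup {d : ℝ | ∃ x ∈ Icc (-1:ℝ) 1, ∃ y ∈ Icc (-1:ℝ) 1, |x - y| ≤ t ∧ d = |ψ x - ψ y|}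

/-- The generalized Jacobi class `GJ`. -/
def IsGJ (w : ℝ → ℝ) : Prop :=
  ∃ (r : ℕ) (ψ : ℝ → ℝ) (γ₀ γ₁ : ℝ) (γs xs : Fin r → ℝ),
    -1 < γ₀ ∧ -1 < γ₁ ∧ (∀ i, -1 < γs i) ∧
    StrictMono xs ∧ (∀ i, xs i ∈ Ioo (-1:ℝ) 1) ∧
    ContinuousOn ψ (Icc (-1:ℝ) 1) ∧ (∀ x ∈ Icc (-1:ℝ) 1, 0 < ψ x) ∧
    IntegrableOn (fun t => modCont ψ t / t) (Ioc (0:ℝ) 1) ∧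
    (∀ x : ℝ, |x| ≤ 1 → w x = ψ x * (1 - x) ^ γ₀ * (1 + x) ^ γ₁ * ∏ i, |x - xs i| ^ γs i) ∧
    (∀ x : ℝ, 1 < |x| → w x = 0)

/-- The `L^p`-norm `‖f‖_{w,e}` on `[-1,1]` (as an extended nonnegative real). -/
def lpnormI (w : ℝ → ℝ) (e : ℝ) (f : ℝ → ℝ) : ℝ≥0∞ :=
  (∫⁻ x in Icc (-1:ℝ) 1, ENNReal.ofReal (|f x| ^ e * w x)) ^ (1 / e)

/-- The `L^p`-norm `‖f‖_{W,e}` on a planar domain `D` (as an extended nonnegative real). -/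
def lpnormD (D : Set (ℝ × ℝ)) (W : ℝ × ℝ → ℝ) (e : ℝ) (f : ℝ × ℝ → ℝ) : ℝ≥0∞ :=
  (∫⁻ q in D, ENNReal.ofReal (|f q| ^ e * W q)) ^ (1 / e)

/-- The operator `s_n^{i,j}(w; f, x)` built from the Christoffel–Darboux kernel of the
orthonormal polynomials `pij` of the weight `J_{i,j} w`. -/
def snOp (w : ℝ → ℝ) (pij : ℕ → Polynomial ℝ) (i j : ℝ) (n : ℕ) (f : ℝ → ℝ) (x : ℝ) : ℝ :=
  Jw (i/2) (j/2) x * ∫ y in Icc (-1:ℝ) 1, f y * CDK pij n x y * Jw (i/2) (j/2) y * w y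

/-- Substitution `(x, y) ↦ (2 x y, x² + y² - 1)` on two-variable polynomials. -/
def quadSub (P : MvPolynomial (Fin 2) ℝ) : MvPolynomial (Fin 2) ℝ :=
  MvPolynomial.aeval
    ![2 * MvPolynomial.X 0 * MvPolynomial.X 1,
      MvPolynomial.X 0 ^ 2 + MvPolynomial.X 1 ^ 2 - 1] P

/-- A one-variable polynomial viewed as a polynomial in the first variable. -/
def polyX (q : Polynomial ℝ) : MvPolynomial (Fin 2) ℝ :=
  Polynomial.aeval (MvPolynomial.X 0) q

/-- A one-variable polynomial viewed as a polynomial in the second variable. -/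
def polyY (q : Polynomial ℝ) : MvPolynomial (Fin 2) ℝ :=
  Polynomial.aeval (MvPolynomial.X 1) q

/-!
In the variable `θ`, the function `y θ = p_n (cos θ)` solves a damped oscillator equation
`y'' + ρ y' + ω² y = 0` with `ω² = n (n + a + b + 1)` and a friction `ρ` which is singular only at
the endpoints `0` and `π`. A correction of the energy `y'² + ω² y²` compensates the friction at
distance at least `1 / ω` from the endpoints, and close to an endpoint the energy itself is
monotone. Hence the energy at any `θ` is controlled by the energy at a single interior point, and
orthonormality bounds the mean energy, which yields bounds for `p_n` and `p_n'` with the sharp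
dependence on `n` and `θ`.

Away from the diagonal, these bounds are inserted into the Christoffel–Darboux formula, with
`p_{n+1}` eliminated in favour of `p_n'`, so that only one degree occurs. Near the diagonal,
the kernel is summed term by term.
-/

section Algebra
open Polynomial

variable {K : Type*} [Field K] {L : K[X] →ₗ[K] K} {p : ℕ → K[X]} {a b : K}

/-- `p` is orthonormal for the moment functional `L`, i.e. for the bilinear form
`(f, g) ↦ L (f * g)`, with `p n` of degree `n`. -/
structure IsOrthonormalSequence (L : K[X] →ₗ[K] K) (p : ℕ → K[X]) : Prop where
  natDegree_eq (n : ℕ) : (p n).natDegree = n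
  apply_mul (n m : ℕ) : L (p n * p m) = if n = m then 1 else 0

/-- The `n`-th off-diagonal entry of the Jacobi matrix of an orthonormal sequence: the coefficient
of `p (n + 1)` in the expansion of `X * p n`. -/
def offDiagCoeff (p : ℕ → K[X]) (n : ℕ) : K :=
  (p n).leadingCoeff / (p (n + 1)).leadingCoeff

namespace IsOrthonormalSequence

lemma ne_zero (h : IsOrthonormalSequence L p) (n : ℕ) : p n ≠ 0 := by
  intro h0
  simpa [h0] using h.apply_mul n n

lemma leadingCoeff_ne_zero (h : IsOrthonormalSequence L p) (n : ℕ) : (p n).leadingCoeff ≠ 0 :=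
  Polynomial.leadingCoeff_ne_zero.2 (h.ne_zero n)

lemma degree_eq (h : IsOrthonormalSequence L p) (n : ℕ) : (p n).degree = n := by
  rw [degree_eq_natDegree (h.ne_zero n), h.natDegree_eq]

lemma mem_degreeLT (h : IsOrthonormalSequence L p) {m n : ℕ} (hm : m < n) :
    p m ∈ degreeLT K n := by
  rw [Polynomial.mem_degreeLT, h.degree_eq]
  exact_mod_cast hm

lemma degreeLT_eq_span (h : IsOrthonormalSequence L p) (n : ℕ) :
    degreeLT K n = Submodule.span K (p '' Set.Iio n) :=
  (Polynomial.Sequence.span_degreeLT ⟨p, h.degree_eq⟩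
    fun m _ ↦ (h.leadingCoeff_ne_zero m).isUnit).symm

lemma apply_mul_eq_zero_of_mem_degreeLT (h : IsOrthonormalSequence L p) {n : ℕ} {q : K[X]}
    (hq : q ∈ degreeLT K n) : L (p n * q) = 0 := by
  rw [h.degreeLT_eq_span] at hq
  induction hq using Submodule.span_induction with
  | mem _ hf =>
    obtain ⟨m, hm, rfl⟩ := hf
    rw [h.apply_mul, if_neg (ne_of_gt hm)]
  | zero => rw [mul_zero, map_zero]
  | add f g _ _ hf hg => rw [mul_add, map_add, hf, hg, add_zero]
  | smul c f _ hf => rw [mul_smul_comm, map_smul, hf, smul_zero]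

lemma eq_zero_of_mem_degreeLT (h : IsOrthonormalSequence L p) {n : ℕ} {q : K[X]}
    (hq : q ∈ degreeLT K n) (horth : ∀ m < n, L (q * p m) = 0) : q = 0 := by
  induction n generalizing q with
  | zero => simpa [h.degreeLT_eq_span] using hq
  | succ n ih =>
    obtain ⟨c, r, hr, rfl⟩ : ∃ c : K, ∃ r ∈ degreeLT K n, q = c • p n + r := by
      rw [h.degreeLT_eq_span, ← Order.succ_eq_add_one, Order.Iio_succ, ← Set.Iio_insert,
        Set.image_insert_eq] at hq
      obtain ⟨c, r, hr, rfl⟩ := Submodule.mem_span_insert.1 hq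
      exact ⟨c, r, h.degreeLT_eq_span n ▸ hr, rfl⟩
    have hc : c = 0 := by
      simpa [add_mul, mul_comm r, h.apply_mul, h.apply_mul_eq_zero_of_mem_degreeLT hr]
        using horth n n.lt_succ_self
    simp only [hc, zero_smul, zero_add] at horth ⊢
    exact ih hr fun m hm ↦ horth m (hm.trans n.lt_succ_self)

lemma eq_smul_of_mem_degreeLT_succ (h : IsOrthonormalSequence L p) {n : ℕ} {q : K[X]}
    (hq : q ∈ degreeLT K (n + 1)) (horth : ∀ m < n, L (q * p m) = 0) :
    q = L (q * p n) • p n := by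
  refine sub_eq_zero.1 (h.eq_zero_of_mem_degreeLT
    (sub_mem hq (Submodule.smul_mem _ _ (h.mem_degreeLT n.lt_succ_self))) fun m hm ↦ ?_)
  rw [sub_mul, smul_mul_assoc, map_sub, map_smul, h.apply_mul]
  rcases (Nat.lt_succ_iff.1 hm).lt_or_eq with hlt | rfl
  · simp [horth m hlt, hlt.ne']
  · simp

lemma X_mul_sub_mem_degreeLT (h : IsOrthonormalSequence L p) (n : ℕ) :
    X * p n - offDiagCoeff p n • p (n + 1) ∈ degreeLT K (n + 1) := by
  have hdeg : (X * p n).degree = ((n + 1 : ℕ) : WithBot ℕ) := by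
    rw [degree_mul, degree_X, h.degree_eq, add_comm, Nat.cast_add, Nat.cast_one]
  have hcoeff : offDiagCoeff p n ≠ 0 :=
    div_ne_zero (h.leadingCoeff_ne_zero n) (h.leadingCoeff_ne_zero (n + 1))
  rw [Polynomial.mem_degreeLT, ← hdeg, smul_eq_C_mul]
  refine degree_sub_lt_left ?_ (mul_ne_zero X_ne_zero (h.ne_zero n)) ?_
  · rw [hdeg, degree_C_mul hcoeff, h.degree_eq]
  · rw [leadingCoeff_mul, leadingCoeff_mul, leadingCoeff_X, leadingCoeff_C, one_mul, offDiagCoeff,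
      div_mul_cancel₀ _ (h.leadingCoeff_ne_zero (n + 1))]

lemma apply_mul_X_mul (h : IsOrthonormalSequence L p) {n m : ℕ} (hm : m ≤ n) :
    L (p (n + 1) * (X * p m)) = if n = m then offDiagCoeff p n else 0 := by
  have hlower := h.apply_mul_eq_zero_of_mem_degreeLT
    (degreeLT_mono (Nat.succ_le_succ hm) (h.X_mul_sub_mem_degreeLT m))
  rw [mul_sub, mul_smul_comm, map_sub, map_smul, h.apply_mul, sub_eq_zero] at hlower
  rw [hlower]
  rcases eq_or_ne n m with rfl | hne <;> simp [*]

lemma exists_X_mul_zero_eq (h : IsOrthonormalSequence L p) :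
    ∃ c : K, X * p 0 - offDiagCoeff p 0 • p 1 = c • p 0 :=
  ⟨_, h.eq_smul_of_mem_degreeLT_succ (h.X_mul_sub_mem_degreeLT 0) (by simp)⟩

lemma exists_X_mul_succ_eq (h : IsOrthonormalSequence L p) (n : ℕ) :
    ∃ c : K, X * p (n + 1) - offDiagCoeff p (n + 1) • p (n + 2) - offDiagCoeff p n • p n
      = c • p (n + 1) := by
  refine ⟨_, h.eq_smul_of_mem_degreeLT_succ (sub_mem (h.X_mul_sub_mem_degreeLT (n + 1))
    (Submodule.smul_mem _ _ (h.mem_degreeLT (by omega)))) fun m hm ↦ ?_⟩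
  rw [sub_mul, sub_mul, mul_comm X, mul_assoc, smul_mul_assoc, smul_mul_assoc, map_sub, map_sub,
    map_smul, map_smul, h.apply_mul_X_mul (Nat.lt_succ_iff.1 hm), h.apply_mul, h.apply_mul,
    if_neg (show n + 2 ≠ m by omega)]
  rcases eq_or_ne n m with rfl | hne <;> simp [*]

theorem christoffel_darboux (h : IsOrthonormalSequence L p) (x y : K) (n : ℕ) :
    (x - y) * ∑ k ∈ Finset.range (n + 1), (p k).eval x * (p k).eval y =
      offDiagCoeff p n *
        ((p (n + 1)).eval x * (p n).eval y - (p n).eval x * (p (n + 1)).eval y) := by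
  induction n with
  | zero =>
    obtain ⟨c, hc⟩ := h.exists_X_mul_zero_eq
    have hx := congrArg (eval x) hc
    have hy := congrArg (eval y) hc
    simp only [eval_sub, eval_mul, eval_X, eval_smul, smul_eq_mul] at hx hy
    simp only [zero_add, Finset.sum_range_one]
    linear_combination (p 0).eval y * hx - (p 0).eval x * hy
  | succ n ih =>
    obtain ⟨c, hc⟩ := h.exists_X_mul_succ_eq n
    have hx := congrArg (eval x) hc
    have hy := congrArg (eval y) hc
    simp only [eval_sub, eval_mul, eval_X, eval_smul, smul_eq_mul] at hx hy
    rw [Finset.sum_range_succ, mul_add, ih]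
    linear_combination (p (n + 1)).eval y * hx - (p (n + 1)).eval x * hy

end IsOrthonormalSequence

lemma X_mul_mem_degreeLT_succ {r : K[X]} {n : ℕ} (hr : r ∈ degreeLT K n) :
    X * r ∈ degreeLT K (n + 1) := by
  simp only [mem_degreeLT, degree_lt_iff_coeff_zero] at hr ⊢
  rintro (_ | k) hk
  · omega
  · rw [coeff_X_mul, hr k (by omega)]

lemma derivative_mem_degreeLT {r : K[X]} {n : ℕ} (hr : r ∈ degreeLT K n) :
    derivative r ∈ degreeLT K n :=
  mem_degreeLT.2 (degree_derivative_le.trans_lt (mem_degreeLT.1 hr))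

lemma X_mul_derivative_sub_mem_degreeLT {r : K[X]} {n : ℕ} (hr : r ∈ degreeLT K (n + 1)) :
    X * derivative r - (n : K) • r ∈ degreeLT K n := by
  simp only [mem_degreeLT, degree_lt_iff_coeff_zero] at hr ⊢
  intro k hk
  have hcoeff : (X * derivative r).coeff k = k * r.coeff k := by
    cases k with
    | zero => simp
    | succ k => rw [coeff_X_mul, coeff_derivative, Nat.cast_succ, mul_comm]
  rw [coeff_sub, coeff_smul, hcoeff, smul_eq_mul]
  rcases hk.eq_or_lt with rfl | hlt
  · exact sub_self _
  · rw [hr k hlt, mul_zero, mul_zero, sub_zero]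

/-- The first-order operator `r ↦ (1 - X²) r' + (b - a - (a + b + 2) X) r`, for which
`w * pearsonOp a b r = ((1 - X²) w r)'` when `w` is the Jacobi weight `(1 - x)^a (1 + x)^b`.
Vanishing on its range is how the weight `w` enters the algebra of a moment functional. -/
def pearsonOp (a b : K) (r : K[X]) : K[X] :=
  (1 - X ^ 2) * derivative r + (C (b - a) - C (a + b + 2) * X) * r

/-- The `n`-th eigenvalue of the Jacobi differential operator `-pearsonOp a b ∘ derivative`. -/
def jacobiEigenvalue (a b : K) (n : ℕ) : K := n * (n + a + b + 1)

lemma pearsonOp_add_mem_degreeLT (a b : K) {r : K[X]} {n : ℕ} (hr : r ∈ degreeLT K (n + 1)) :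
    pearsonOp a b r + (n + a + b + 2) • (X * r) ∈ degreeLT K (n + 1) := by
  have hsplit : pearsonOp a b r + (n + a + b + 2) • (X * r)
      = derivative r + (b - a) • r - X * (X * derivative r - (n : K) • r) := by
    simp only [pearsonOp, smul_eq_C_mul, map_add]
    ring
  rw [hsplit]
  exact sub_mem (add_mem (derivative_mem_degreeLT hr) (Submodule.smul_mem _ _ hr))
    (X_mul_mem_degreeLT_succ (X_mul_derivative_sub_mem_degreeLT hr))

lemma pearsonOp_derivative_add_mem_degreeLT (a b : K) {f : K[X]} {n : ℕ}
    (hf : f ∈ degreeLT K (n + 1)) :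
    pearsonOp a b (derivative f) + jacobiEigenvalue a b n • f ∈ degreeLT K n := by
  have hlower := X_mul_derivative_sub_mem_degreeLT hf
  cases n with
  | zero =>
    have hf' : derivative f = 0 := by simpa [mem_degreeLT, Nat.WithBot.lt_zero_iff] using hlower
    simp [pearsonOp, jacobiEigenvalue, hf']
  | succ n =>
    have hf' : derivative f ∈ degreeLT K (n + 1) := by
      simp only [mem_degreeLT, degree_lt_iff_coeff_zero] at hf ⊢
      intro k hk
      rw [coeff_derivative, hf (k + 1) (by omega), zero_mul]
    have hsplit : pearsonOp a b (derivative f) + jacobiEigenvalue a b (n + 1) • f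
        = (pearsonOp a b (derivative f) + (n + a + b + 2) • (X * derivative f))
          - (n + a + b + 2) • (X * derivative f - ((n + 1 : ℕ) : K) • f) := by
      simp only [jacobiEigenvalue, smul_eq_C_mul, map_add, map_mul, Nat.cast_succ, map_ofNat,
        map_one]
      ring
    rw [hsplit]
    exact sub_mem (pearsonOp_add_mem_degreeLT a b hf') (Submodule.smul_mem _ _ hlower)

lemma apply_mul_pearsonOp (hL : ∀ r, L (pearsonOp a b r) = 0) (f g : K[X]) :
    L ((1 - X ^ 2) * derivative f * g) = -L (f * pearsonOp a b g) := by
  have hprod : pearsonOp a b (f * g)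
      = (1 - X ^ 2) * derivative f * g + f * pearsonOp a b g := by
    simp only [pearsonOp, derivative_mul]
    ring
  rw [eq_neg_iff_add_eq_zero, ← map_add, ← hprod, hL]

namespace IsOrthonormalSequence

theorem pearsonOp_derivative (h : IsOrthonormalSequence L p) (hL : ∀ r, L (pearsonOp a b r) = 0)
    (n : ℕ) : pearsonOp a b (derivative (p n)) = -(jacobiEigenvalue a b n • p n) := by
  have hlower (k : ℕ) := pearsonOp_derivative_add_mem_degreeLT a b (h.mem_degreeLT k.lt_succ_self)
  rw [eq_neg_iff_add_eq_zero]
  refine h.eq_zero_of_mem_degreeLT (hlower n) fun m hm ↦ ?_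
  have hmem : pearsonOp a b (derivative (p m)) ∈ degreeLT K n :=
    (Submodule.add_mem_iff_left _ (Submodule.smul_mem _ _ (h.mem_degreeLT hm))).1
      (degreeLT_mono hm.le (hlower m))
  have hsymm : L (pearsonOp a b (derivative (p n)) * p m)
      = L (p n * pearsonOp a b (derivative (p m))) := by
    rw [mul_comm, ← neg_inj, ← apply_mul_pearsonOp hL, ← apply_mul_pearsonOp hL, mul_right_comm]
  rw [add_mul, smul_mul_assoc, map_add, map_smul, hsymm,
    h.apply_mul_eq_zero_of_mem_degreeLT hmem, h.apply_mul, if_neg hm.ne', smul_zero, add_zero]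

lemma apply_one_sub_sq_mul_derivative_sq (h : IsOrthonormalSequence L p)
    (hL : ∀ r, L (pearsonOp a b r) = 0) (n : ℕ) :
    L ((1 - X ^ 2) * derivative (p n) ^ 2) = jacobiEigenvalue a b n := by
  rw [pow_two (derivative _), ← mul_assoc, apply_mul_pearsonOp hL, h.pearsonOp_derivative hL,
    mul_neg, mul_smul_comm, map_neg, map_smul, h.apply_mul, if_pos rfl, neg_neg, smul_eq_mul,
    mul_one]

theorem exists_structure_relation (h : IsOrthonormalSequence L p)
    (hL : ∀ r, L (pearsonOp a b r) = 0) (n : ℕ) :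
    ∃ c : K, (1 - X ^ 2) * derivative (p n) - (n + a + b + 1) • (X * p n)
      + ((2 * n + a + b + 1) * offDiagCoeff p n) • p (n + 1) = c • p n := by
  have hp := h.mem_degreeLT n.lt_succ_self
  refine ⟨_, h.eq_smul_of_mem_degreeLT_succ ?_ fun m hm ↦ ?_⟩
  · have hsplit : (1 - X ^ 2) * derivative (p n) - (n + a + b + 1) • (X * p n)
        + ((2 * n + a + b + 1) * offDiagCoeff p n) • p (n + 1)
        = derivative (p n) - X * (X * derivative (p n) - (n : K) • p n)
          - (2 * n + a + b + 1) • (X * p n - offDiagCoeff p n • p (n + 1)) := by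
      simp only [smul_eq_C_mul, map_add, map_mul, map_ofNat]
      ring
    rw [hsplit]
    exact sub_mem (sub_mem (derivative_mem_degreeLT hp)
      (X_mul_mem_degreeLT_succ (X_mul_derivative_sub_mem_degreeLT hp)))
      (Submodule.smul_mem _ _ (h.X_mul_sub_mem_degreeLT n))
  · obtain ⟨k, rfl⟩ : ∃ k, n = k + 1 := ⟨n - 1, by omega⟩
    have hlower := h.apply_mul_eq_zero_of_mem_degreeLT
      (pearsonOp_add_mem_degreeLT a b (h.mem_degreeLT hm))
    rw [mul_add, mul_smul_comm, map_add, map_smul, smul_eq_mul] at hlower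
    rw [add_mul, sub_mul, smul_mul_assoc, smul_mul_assoc, map_add, map_sub, map_smul, map_smul,
      apply_mul_pearsonOp hL, mul_comm X, mul_assoc (p _), h.apply_mul,
      if_neg (show k + 1 + 1 ≠ m by omega), smul_zero, smul_eq_mul, Nat.cast_succ]
    linear_combination -hlower

-- The structure relation eliminates `p (n + 1)` from the Christoffel–Darboux formula.
theorem christoffel_darboux_derivative (h : IsOrthonormalSequence L p)
    (hL : ∀ r, L (pearsonOp a b r) = 0) (x y : K) (n : ℕ) :
    (2 * n + a + b + 1) * ((x - y) * ∑ k ∈ Finset.range (n + 1), (p k).eval x * (p k).eval y) =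
      (1 - y ^ 2) * (derivative (p n)).eval y * (p n).eval x
        - (1 - x ^ 2) * (derivative (p n)).eval x * (p n).eval y
        + (n + a + b + 1) * (x - y) * ((p n).eval x * (p n).eval y) := by
  obtain ⟨c, hc⟩ := h.exists_structure_relation hL n
  have hx := congrArg (eval x) hc
  have hy := congrArg (eval y) hc
  simp only [eval_sub, eval_add, eval_mul, eval_X, eval_smul, eval_one, eval_pow,
    smul_eq_mul] at hx hy
  rw [h.christoffel_darboux]
  linear_combination (p n).eval y * hx - (p n).eval x * hy

end IsOrthonormalSequence

end Algebra

section Moments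
open Polynomial

variable {w : ℝ → ℝ} {p : ℕ → ℝ[X]} {a b c : ℝ}

/-- The moment functional `q ↦ ∫ q w` on `[-1, 1]` of an integrable weight `w`. -/
def momentFunctional (w : ℝ → ℝ) (hw : IntegrableOn w (Icc (-1) 1)) : ℝ[X] →ₗ[ℝ] ℝ where
  toFun q := ∫ x in Icc (-1 : ℝ) 1, q.eval x * w x
  map_add' q r := by
    simp only [eval_add, add_mul]
    exact integral_add (hw.continuousOn_mul q.continuous.continuousOn isCompact_Icc)
      (hw.continuousOn_mul r.continuous.continuousOn isCompact_Icc)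
  map_smul' t q := by
    simp only [eval_smul, smul_eq_mul, mul_assoc, integral_const_mul, RingHom.id_apply]

namespace IsONPS

lemma integrableOn (hp : IsONPS w p) : IntegrableOn w (Icc (-1) 1) := by
  have hp0 := eq_C_of_natDegree_eq_zero (hp.1 0)
  have hunit : ∫ x in Icc (-1 : ℝ) 1, (p 0).eval x * (p 0).eval x * w x ≠ 0 := by
    rw [hp.2.2 0 0, if_pos rfl]
    exact one_ne_zero
  rw [hp0] at hunit
  simp only [eval_C, integral_const_mul] at hunit
  exact not_imp_comm.1 integral_undef (right_ne_zero_of_mul hunit)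

lemma isOrthonormalSequence (hp : IsONPS w p) :
    IsOrthonormalSequence (momentFunctional w hp.integrableOn) p where
  natDegree_eq := hp.1
  apply_mul n m := by
    rw [← hp.2.2 n m]
    simp only [momentFunctional, LinearMap.coe_mk, AddHom.coe_mk, eval_mul]

end IsONPS

/-- The Jacobi weight `c (1 - x)^a (1 + x)^b`. -/
def jacobiWeight (c a b x : ℝ) : ℝ := c * (1 - x) ^ a * (1 + x) ^ b

lemma jacobiWeight_nonneg (hc : 0 ≤ c) {x : ℝ} (hx : x ∈ Icc (-1) 1) :
    0 ≤ jacobiWeight c a b x :=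
  mul_nonneg (mul_nonneg hc (rpow_nonneg (by linarith [hx.2]) a))
    (rpow_nonneg (by linarith [hx.1]) b)

lemma jacobiWeight_pos (hc : 0 < c) {x : ℝ} (hx : x ∈ Ioo (-1) 1) :
    0 < jacobiWeight c a b x :=
  mul_pos (mul_pos hc (rpow_pos_of_pos (by linarith [hx.2]) a))
    (rpow_pos_of_pos (by linarith [hx.1]) b)

lemma continuous_jacobiWeight (ha : 0 ≤ a) (hb : 0 ≤ b) : Continuous (jacobiWeight c a b) :=
  ((continuous_const.mul ((continuous_const.sub continuous_id).rpow_const fun _ ↦ Or.inr ha))).mul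
    ((continuous_const.add continuous_id).rpow_const fun _ ↦ Or.inr hb)

lemma hasDerivAt_jacobiWeight_mul_eval (r : ℝ[X]) {x : ℝ} (hx : x ∈ Ioo (-1) 1) :
    HasDerivAt (fun x ↦ jacobiWeight c (a + 1) (b + 1) x * r.eval x)
      ((pearsonOp a b r).eval x * jacobiWeight c a b x) x := by
  have h1 : 0 < 1 - x := by linarith [hx.2]
  have h2 : 0 < 1 + x := by linarith [hx.1]
  have hd1 := ((hasDerivAt_id x).const_sub 1).rpow_const (p := a + 1) (Or.inl h1.ne')
  have hd2 := ((hasDerivAt_id x).const_add 1).rpow_const (p := b + 1) (Or.inl h2.ne')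
  refine (((hd1.const_mul c).mul hd2).mul (r.hasDerivAt x)).congr_deriv ?_
  simp only [pearsonOp, jacobiWeight, Pi.mul_apply, id, add_sub_cancel_right, rpow_add_one h1.ne',
    rpow_add_one h2.ne', eval_add, eval_sub, eval_mul, eval_pow, eval_X, eval_C, eval_one]
  ring

lemma momentFunctional_pearsonOp (ha : -1 < a) (hb : -1 < b)
    (hw : IntegrableOn (jacobiWeight c a b) (Icc (-1) 1)) (r : ℝ[X]) :
    momentFunctional _ hw (pearsonOp a b r) = 0 := by
  have hintegrable : IntegrableOn (fun x ↦ (pearsonOp a b r).eval x * jacobiWeight c a b x)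
      (Icc (-1) 1) := hw.continuousOn_mul (pearsonOp a b r).continuous.continuousOn isCompact_Icc
  change ∫ x in Icc (-1 : ℝ) 1, (pearsonOp a b r).eval x * jacobiWeight c a b x = 0
  rw [integral_Icc_eq_integral_Ioc, ← intervalIntegral.integral_of_le (by norm_num),
    intervalIntegral.integral_eq_sub_of_hasDerivAt_of_le (by norm_num)
      ((continuous_jacobiWeight (by linarith) (by linarith)).mul r.continuous).continuousOn
      (fun x hx ↦ hasDerivAt_jacobiWeight_mul_eval r hx)
      ((intervalIntegrable_iff_integrableOn_Icc_of_le (by norm_num)).2 hintegrable)]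
  simp [jacobiWeight, zero_rpow (show a + 1 ≠ 0 by linarith),
    zero_rpow (show b + 1 ≠ 0 by linarith)]

lemma exists_mem_mul_setIntegral_le {X : Type*} [TopologicalSpace X] [T2Space X]
    [MeasurableSpace X] [OpensMeasurableSpace X] {μ : Measure X} {f w : X → ℝ} {s t : Set X}
    (ht : IsCompact t) (hne : t.Nonempty) (hs : MeasurableSet s) (hts : t ⊆ s)
    (hf : ContinuousOn f t) (hf0 : ∀ x ∈ s, 0 ≤ f x) (hw0 : ∀ x ∈ s, 0 ≤ w x)
    (hw : IntegrableOn w t μ) (hfw : IntegrableOn (fun x ↦ f x * w x) s μ) :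
    ∃ x ∈ t, f x * ∫ y in t, w y ∂μ ≤ ∫ y in s, f y * w y ∂μ := by
  obtain ⟨x, hx, hmin⟩ := ht.exists_isMinOn hne hf
  refine ⟨x, hx, ?_⟩
  calc f x * ∫ y in t, w y ∂μ = ∫ y in t, f x * w y ∂μ := (integral_const_mul _ _).symm
    _ ≤ ∫ y in t, f y * w y ∂μ :=
        setIntegral_mono_on (hw.const_mul _) (hfw.mono_set hts) ht.measurableSet
          fun y hy ↦ mul_le_mul_of_nonneg_right (hmin hy) (hw0 y (hts hy))
    _ ≤ ∫ y in s, f y * w y ∂μ :=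
        setIntegral_mono_set hfw ((ae_restrict_mem hs).mono fun y hy ↦
          mul_nonneg (hf0 y hy) (hw0 y hy)) hts.eventuallyLE

lemma setIntegral_jacobiWeight_pos (hc : 0 < c)
    (hw : IntegrableOn (jacobiWeight c a b) (Icc (-1) 1)) :
    0 < ∫ x in Icc (-(1 / 2) : ℝ) (1 / 2), jacobiWeight c a b x := by
  rw [integral_Icc_eq_integral_Ioc, ← intervalIntegral.integral_of_le (by norm_num)]
  refine intervalIntegral.intervalIntegral_pos_of_pos_on
    ((intervalIntegrable_iff_integrableOn_Icc_of_le (by norm_num)).2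
      (hw.mono_set (Icc_subset_Icc (by norm_num) (by norm_num))))
    (fun x hx ↦ jacobiWeight_pos hc ⟨by linarith [hx.1], by linarith [hx.2]⟩) (by norm_num)

lemma jacobiEigenvalue_nonneg (ha : -1 < a) (hb : -1 < b) (n : ℕ) : 0 ≤ jacobiEigenvalue a b n := by
  rcases n.eq_zero_or_pos with rfl | hn
  · simp [jacobiEigenvalue]
  · have : (1 : ℝ) ≤ n := by exact_mod_cast hn
    exact mul_nonneg n.cast_nonneg (by linarith)

theorem IsONPS.exists_energy_le (ha : -1 < a) (hb : -1 < b) (hc : 0 < c)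
    (hp : IsONPS (jacobiWeight c a b) p) :
    ∃ M, 0 < M ∧ ∀ n, ∃ x ∈ Icc (-(1 / 2) : ℝ) (1 / 2),
      (1 - x ^ 2) * (derivative (p n)).eval x ^ 2 + jacobiEigenvalue a b n * (p n).eval x ^ 2
        ≤ M * jacobiEigenvalue a b n := by
  set t := Icc (-(1 / 2) : ℝ) (1 / 2)
  have hmass := setIntegral_jacobiWeight_pos hc hp.integrableOn
  have hts : t ⊆ Icc (-1) 1 := Icc_subset_Icc (by norm_num) (by norm_num)
  refine ⟨2 / ∫ x in t, jacobiWeight c a b x, by positivity, fun n ↦ ?_⟩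
  set q : ℝ[X] := (1 - X ^ 2) * derivative (p n) ^ 2 + jacobiEigenvalue a b n • (p n * p n)
  have hq (x : ℝ) : q.eval x = (1 - x ^ 2) * (derivative (p n)).eval x ^ 2
      + jacobiEigenvalue a b n * (p n).eval x ^ 2 := by
    simp [q, pow_two]
  have hq0 : ∀ x ∈ Icc (-1 : ℝ) 1, 0 ≤ q.eval x := fun x hx ↦ by
    have := jacobiEigenvalue_nonneg ha hb n
    have : 0 ≤ 1 - x ^ 2 := by nlinarith [hx.1, hx.2]
    rw [hq]
    positivity
  have hLq : momentFunctional _ hp.integrableOn q = 2 * jacobiEigenvalue a b n := by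
    rw [map_add, map_smul, hp.isOrthonormalSequence.apply_mul, if_pos rfl,
      hp.isOrthonormalSequence.apply_one_sub_sq_mul_derivative_sq
        (momentFunctional_pearsonOp ha hb hp.integrableOn), smul_eq_mul]
    ring
  obtain ⟨x, hx, hle⟩ := exists_mem_mul_setIntegral_le isCompact_Icc
    (nonempty_Icc.2 (by norm_num)) measurableSet_Icc hts q.continuous.continuousOn hq0
    (fun x hx ↦ jacobiWeight_nonneg hc.le hx) (hp.integrableOn.mono_set hts)
    (hp.integrableOn.continuousOn_mul q.continuous.continuousOn isCompact_Icc)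
  refine ⟨x, hx, ?_⟩
  rw [← hq, div_mul_eq_mul_div, le_div_iff₀ hmass, ← hLq]
  exact hle

end Moments

section Oscillator

variable {ρ y z : ℝ → ℝ} {ω : ℝ} {s : Set ℝ}

/-- A solution of the damped oscillator equation `y'' + ρ y' + ω² y = 0` on `s`, with velocity
`z = y'`. The function `y` is globally `C¹`, so that endpoints where the friction `ρ` is singular
need no one-sided derivatives. -/
structure IsDampedOscillator (ρ : ℝ → ℝ) (ω : ℝ) (s : Set ℝ) (y z : ℝ → ℝ) : Prop where
  hasDerivAt_fst (t : ℝ) : HasDerivAt y (z t) t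
  continuous_snd : Continuous z
  hasDerivAt_snd : ∀ t ∈ s, HasDerivAt z (-ρ t * z t - ω ^ 2 * y t) t

/-- The mechanical energy `z² + (ω y)²` of an oscillator of frequency `ω`. -/
def oscillatorEnergy (ω : ℝ) (y z : ℝ → ℝ) (t : ℝ) : ℝ := z t ^ 2 + (ω * y t) ^ 2

lemma oscillatorEnergy_nonneg (ω : ℝ) (y z : ℝ → ℝ) (t : ℝ) : 0 ≤ oscillatorEnergy ω y z t :=
  add_nonneg (sq_nonneg _) (sq_nonneg _)

namespace IsDampedOscillator

lemma mono (h : IsDampedOscillator ρ ω s y z) {t : Set ℝ} (hts : t ⊆ s) :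
    IsDampedOscillator ρ ω t y z :=
  ⟨h.hasDerivAt_fst, h.continuous_snd, fun x hx ↦ h.hasDerivAt_snd x (hts hx)⟩

lemma continuous_fst (h : IsDampedOscillator ρ ω s y z) : Continuous y :=
  continuous_iff_continuousAt.2 fun t ↦ (h.hasDerivAt_fst t).continuousAt

lemma continuous_energy (h : IsDampedOscillator ρ ω s y z) :
    Continuous (oscillatorEnergy ω y z) :=
  (h.continuous_snd.pow 2).add ((continuous_const.mul h.continuous_fst).pow 2)

lemma hasDerivAt_energy (h : IsDampedOscillator ρ ω s y z) {t : ℝ} (ht : t ∈ s) :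
    HasDerivAt (oscillatorEnergy ω y z) (-(2 * ρ t * z t ^ 2)) t := by
  refine (((h.hasDerivAt_snd t ht).pow 2).add
    (((h.hasDerivAt_fst t).const_mul ω).pow 2)).congr_deriv ?_
  simp only [Nat.cast_ofNat, Nat.add_one_sub_one, pow_one]
  ring

lemma monotoneOn_energy_mul (hs : Convex ℝ s) (h : IsDampedOscillator ρ ω (interior s) y z)
    {g g' : ℝ → ℝ} (hg : ContinuousOn g s) (hg' : ∀ t ∈ interior s, HasDerivAt g (g' t) t)
    (hg'0 : ∀ t ∈ interior s, 0 ≤ g' t) (hρ : ∀ t ∈ interior s, 2 * ρ t * g t ≤ g' t) :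
    MonotoneOn (fun t ↦ oscillatorEnergy ω y z t * g t) s := by
  refine monotoneOn_of_hasDerivWithinAt_nonneg hs (h.continuous_energy.continuousOn.mul hg)
    (fun t ht ↦ ((h.hasDerivAt_energy ht).mul (hg' t ht)).hasDerivWithinAt) fun t ht ↦ ?_
  calc 0 ≤ z t ^ 2 * (g' t - 2 * ρ t * g t) + (ω * y t) ^ 2 * g' t :=
        add_nonneg (mul_nonneg (sq_nonneg _) (sub_nonneg.2 (hρ t ht)))
          (mul_nonneg (sq_nonneg _) (hg'0 t ht))
    _ = _ := by
        simp only [oscillatorEnergy]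
        ring

lemma energy_le_four_mul (h : IsDampedOscillator ρ ω s y z) {t₀ t₁ M : ℝ} (hz : z t₀ = 0)
    (hω : 0 ≤ ω) (hM : 0 ≤ M) (ht : t₀ ≤ t₁)
    (hbound : ∀ t ∈ Icc t₀ t₁, oscillatorEnergy ω y z t ≤ M ^ 2 * oscillatorEnergy ω y z t₀)
    (hsmall : 2 * M * ω * (t₁ - t₀) ≤ 1) :
    oscillatorEnergy ω y z t₀ ≤ 4 * oscillatorEnergy ω y z t₁ := by
  have hspeed : ∀ t ∈ Icc t₀ t₁, ‖z t‖ ≤ M * ω * |y t₀| := fun t htmem ↦ by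
    refine abs_le_of_sq_le_sq ?_ (by positivity)
    calc z t ^ 2 ≤ oscillatorEnergy ω y z t := le_add_of_nonneg_right (sq_nonneg _)
      _ ≤ M ^ 2 * oscillatorEnergy ω y z t₀ := hbound t htmem
      _ = (M * ω * |y t₀|) ^ 2 := by
          rw [oscillatorEnergy, hz, mul_pow (M * ω), sq_abs]
          ring
  have hmove : |y t₁ - y t₀| ≤ |y t₀| / 2 := by
    have := (convex_Icc t₀ t₁).norm_image_sub_le_of_norm_hasDerivWithin_le
      (fun t _ ↦ (h.hasDerivAt_fst t).hasDerivWithinAt) hspeed (left_mem_Icc.2 ht)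
      (right_mem_Icc.2 ht)
    rw [Real.norm_eq_abs, Real.norm_of_nonneg (sub_nonneg.2 ht)] at this
    nlinarith [mul_le_mul_of_nonneg_right hsmall (abs_nonneg (y t₀))]
  have hy : |y t₀| ≤ |2 * y t₁| := by
    rw [abs_mul, abs_two]
    linarith [abs_sub_abs_le_abs_sub (y t₀) (y t₁), abs_sub_comm (y t₀) (y t₁)]
  have hsq := mul_le_mul_of_nonneg_left (sq_le_sq.2 hy) (sq_nonneg ω)
  simp only [oscillatorEnergy, hz, mul_pow] at hsq ⊢
  linarith [sq_nonneg (z t₁)]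

end IsDampedOscillator

/-- The energy corrected by the cross term `ρ y z`: after multiplication by an integrating factor
`w` with `w' = ρ w`, its derivative is `w ρ' y z`, which is of lower order in `ω`. -/
def correctedEnergy (ρ : ℝ → ℝ) (ω : ℝ) (y z : ℝ → ℝ) (t : ℝ) : ℝ :=
  oscillatorEnergy ω y z t + ρ t * (y t * z t)

lemma abs_mul_fst_snd_le (hω : 0 < ω) (y z : ℝ → ℝ) (t : ℝ) :
    |y t * z t| ≤ oscillatorEnergy ω y z t / (2 * ω) := by
  rw [le_div_iff₀ (by positivity), ← abs_of_pos (show 0 < 2 * ω by positivity), ← abs_mul, abs_le,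
    oscillatorEnergy]
  constructor <;> linarith [sq_nonneg (z t + ω * y t), sq_nonneg (z t - ω * y t)]

lemma correctedEnergy_mem_Icc (hω : 0 < ω) {t : ℝ} (hρ : |ρ t| ≤ ω / 4) (y z : ℝ → ℝ) :
    correctedEnergy ρ ω y z t ∈
      Icc (7 / 8 * oscillatorEnergy ω y z t) (9 / 8 * oscillatorEnergy ω y z t) := by
  have hcross : |ρ t * (y t * z t)| ≤ oscillatorEnergy ω y z t / 8 := by
    rw [abs_mul]
    calc |ρ t| * |y t * z t| ≤ ω / 4 * (oscillatorEnergy ω y z t / (2 * ω)) :=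
          mul_le_mul hρ (abs_mul_fst_snd_le hω y z t) (abs_nonneg _) (by positivity)
      _ = oscillatorEnergy ω y z t / 8 := by
          field_simp
          ring
  rw [correctedEnergy]
  constructor <;> linarith [abs_le.1 hcross]

namespace IsDampedOscillator

lemma hasDerivAt_mul_correctedEnergy (h : IsDampedOscillator ρ ω s y z) {t ρ' : ℝ} {w : ℝ → ℝ}
    (ht : t ∈ s) (hρ : HasDerivAt ρ ρ' t) (hw : HasDerivAt w (ρ t * w t) t) :
    HasDerivAt (fun t ↦ w t * correctedEnergy ρ ω y z t) (w t * ρ' * (y t * z t)) t := by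
  refine (hw.mul ((h.hasDerivAt_energy ht).add
    (hρ.mul ((h.hasDerivAt_fst t).mul (h.hasDerivAt_snd t ht))))).congr_deriv ?_
  simp only [oscillatorEnergy, Pi.add_apply, Pi.mul_apply]
  ring

variable {t₁ t₂ : ℝ} {ρ' w : ℝ → ℝ}

lemma monotoneOn_exp_mul_correctedEnergy (h : IsDampedOscillator ρ ω (Icc t₁ t₂) y z)
    (hω : 0 < ω) (hρ : ∀ t ∈ Icc t₁ t₂, |ρ t| ≤ ω / 4)
    (hρ' : ∀ t ∈ Icc t₁ t₂, HasDerivAt ρ (ρ' t) t) (hρ'0 : ∀ t ∈ Icc t₁ t₂, ρ' t ≤ 0)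
    (hw : ∀ t ∈ Icc t₁ t₂, HasDerivAt w (ρ t * w t) t) (hw0 : ∀ t ∈ Icc t₁ t₂, 0 ≤ w t) :
    MonotoneOn (fun t ↦ exp (-(ρ t / ω)) * (w t * correctedEnergy ρ ω y z t)) (Icc t₁ t₂) := by
  have hderiv (t : ℝ) (ht : t ∈ Icc t₁ t₂) :=
    ((hρ' t ht).div_const ω).neg.exp.mul
      (h.hasDerivAt_mul_correctedEnergy ht (hρ' t ht) (hw t ht))
  refine monotoneOn_of_hasDerivWithinAt_nonneg (convex_Icc t₁ t₂)
    (fun t ht ↦ (hderiv t ht).continuousAt.continuousWithinAt)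
    (fun t ht ↦ (hderiv t (interior_subset ht)).hasDerivWithinAt) fun t htint ↦ ?_
  have ht := interior_subset htint
  have hcross : y t * z t ≤ correctedEnergy ρ ω y z t / ω := by
    have hcross' := (abs_le.1 (abs_mul_fst_snd_le hω y z t)).2
    have hcorr := (correctedEnergy_mem_Icc hω (hρ t ht) y z).1
    rw [le_div_iff₀ (by positivity)] at hcross' ⊢
    linarith [oscillatorEnergy_nonneg ω y z t]
  calc 0 ≤ exp (-(ρ t / ω)) * (-ρ' t * w t * (correctedEnergy ρ ω y z t / ω - y t * z t)) :=
        mul_nonneg (exp_nonneg _) (mul_nonneg (mul_nonneg (neg_nonneg.2 (hρ'0 t ht)) (hw0 t ht))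
          (sub_nonneg.2 hcross))
    _ = _ := by
        simp only [Pi.neg_apply]
        ring

theorem energy_mul_le_four_mul (h : IsDampedOscillator ρ ω (Icc t₁ t₂) y z) (hω : 0 < ω)
    (ht : t₁ ≤ t₂) (hρ : ∀ t ∈ Icc t₁ t₂, |ρ t| ≤ ω / 4)
    (hρ' : ∀ t ∈ Icc t₁ t₂, HasDerivAt ρ (ρ' t) t) (hρ'0 : ∀ t ∈ Icc t₁ t₂, ρ' t ≤ 0)
    (hw : ∀ t ∈ Icc t₁ t₂, HasDerivAt w (ρ t * w t) t) (hw0 : ∀ t ∈ Icc t₁ t₂, 0 ≤ w t) :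
    w t₁ * oscillatorEnergy ω y z t₁ ≤ 4 * (w t₂ * oscillatorEnergy ω y z t₂) := by
  have h₁ := left_mem_Icc.2 ht
  have h₂ := right_mem_Icc.2 ht
  have hcorr₁ := (correctedEnergy_mem_Icc hω (hρ t₁ h₁) y z).1
  have hcorr₂ := (correctedEnergy_mem_Icc hω (hρ t₂ h₂) y z).2
  have hE₂ := oscillatorEnergy_nonneg ω y z t₂
  have hmono := h.monotoneOn_exp_mul_correctedEnergy hω hρ hρ' hρ'0 hw hw0 h₁ h₂ ht
  have hH₂ : 0 ≤ w t₂ * correctedEnergy ρ ω y z t₂ :=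
    mul_nonneg (hw0 t₂ h₂) ((by positivity : 0 ≤ 7 / 8 * oscillatorEnergy ω y z t₂).trans
      (correctedEnergy_mem_Icc hω (hρ t₂ h₂) y z).1)
  have hexp : exp (-(ρ t₂ / ω)) ≤ exp 1 * exp (-(ρ t₁ / ω)) := by
    have := (abs_le.1 (hρ t₁ h₁)).2
    have := (abs_le.1 (hρ t₂ h₂)).1
    rw [← exp_add, exp_le_exp, ← sub_nonneg,
      show 1 + -(ρ t₁ / ω) - -(ρ t₂ / ω) = (ω - ρ t₁ + ρ t₂) / ω by field_simp; ring]
    exact div_nonneg (by linarith) hω.le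
  have hcompare : w t₁ * correctedEnergy ρ ω y z t₁
      ≤ exp 1 * (w t₂ * correctedEnergy ρ ω y z t₂) := by
    refine le_of_mul_le_mul_left (hmono.trans ?_) (exp_pos (-(ρ t₁ / ω)))
    rw [mul_left_comm, ← mul_assoc (exp 1)]
    exact mul_le_mul_of_nonneg_right hexp hH₂
  have hlow := mul_le_mul_of_nonneg_left hcorr₁ (hw0 t₁ h₁)
  have hupp := mul_le_mul_of_nonneg_left hcorr₂ (hw0 t₂ h₂)
  have he := mul_le_mul_of_nonneg_right exp_one_lt_d9.le hH₂
  linarith [mul_nonneg (hw0 t₂ h₂) hE₂]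

end IsDampedOscillator

end Oscillator

section JacobiOscillator

variable {ν μ ω θ : ℝ} {y z : ℝ → ℝ}

lemma sin_half_nonneg (hθ : θ ∈ Icc 0 π) : 0 ≤ sin (θ / 2) :=
  sin_nonneg_of_nonneg_of_le_pi (by linarith [hθ.1]) (by linarith [hθ.1, hθ.2])

lemma sin_half_pos (hθ : θ ∈ Ioo 0 π) : 0 < sin (θ / 2) :=
  sin_pos_of_pos_of_lt_pi (by linarith [hθ.1]) (by linarith [hθ.1, hθ.2])

lemma sin_half_pi_sub (θ : ℝ) : sin ((π - θ) / 2) = cos (θ / 2) := by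
  rw [sub_div, sin_pi_div_two_sub]

lemma cos_half_pi_sub (θ : ℝ) : cos ((π - θ) / 2) = sin (θ / 2) := by
  rw [sub_div, cos_pi_div_two_sub]

lemma pi_sub_mem_Icc (hθ : θ ∈ Icc 0 π) : π - θ ∈ Icc 0 π :=
  ⟨sub_nonneg.2 hθ.2, sub_le_self _ hθ.1⟩

lemma pi_sub_mem_Ioo (hθ : θ ∈ Ioo 0 π) : π - θ ∈ Ioo 0 π :=
  ⟨sub_pos.2 hθ.2, sub_lt_self _ hθ.1⟩

lemma cos_half_nonneg (hθ : θ ∈ Icc 0 π) : 0 ≤ cos (θ / 2) :=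
  sin_half_pi_sub θ ▸ sin_half_nonneg (pi_sub_mem_Icc hθ)

lemma cos_half_pos (hθ : θ ∈ Ioo 0 π) : 0 < cos (θ / 2) :=
  sin_half_pi_sub θ ▸ sin_half_pos (pi_sub_mem_Ioo hθ)

lemma le_pi_mul_sin_half (hθ : θ ∈ Icc 0 π) : θ ≤ π * sin (θ / 2) := by
  have := mul_le_mul_of_nonneg_left (mul_le_sin (x := θ / 2) (by linarith [hθ.1])
    (by linarith [hθ.2])) pi_pos.le
  rwa [← mul_assoc, mul_div_cancel₀ _ pi_ne_zero, mul_div_cancel₀ _ two_ne_zero] at this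

lemma half_le_cos_half (hθ : θ ∈ Icc 0 (2 * π / 3)) : 1 / 2 ≤ cos (θ / 2) := by
  rw [← cos_pi_div_three]
  exact cos_le_cos_of_nonneg_of_le_pi (by linarith [hθ.1]) (by linarith [pi_pos])
    (by linarith [hθ.2])

lemma hasDerivAt_sin_half (θ : ℝ) : HasDerivAt (fun t ↦ sin (t / 2)) (cos (θ / 2) / 2) θ := by
  simpa [div_eq_mul_inv] using ((hasDerivAt_id θ).div_const 2).sin

lemma hasDerivAt_cos_half (θ : ℝ) : HasDerivAt (fun t ↦ cos (t / 2)) (-sin (θ / 2) / 2) θ := by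
  simpa [div_eq_mul_inv] using ((hasDerivAt_id θ).div_const 2).cos

lemma hasDerivAt_sin_half_rpow (e : ℝ) (hθ : θ ∈ Ioo 0 π) :
    HasDerivAt (fun t ↦ sin (t / 2) ^ e)
      (e / 2 * (cos (θ / 2) / sin (θ / 2)) * sin (θ / 2) ^ e) θ := by
  have hs := (sin_half_pos hθ).ne'
  refine ((hasDerivAt_sin_half θ).rpow_const (p := e) (Or.inl hs)).congr_deriv ?_
  rw [rpow_sub_one hs]
  ring

lemma hasDerivAt_cos_half_rpow (e : ℝ) (hθ : θ ∈ Ioo 0 π) :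
    HasDerivAt (fun t ↦ cos (t / 2) ^ e)
      (-(e / 2 * (sin (θ / 2) / cos (θ / 2)) * cos (θ / 2) ^ e)) θ := by
  have hc := (cos_half_pos hθ).ne'
  refine ((hasDerivAt_cos_half θ).rpow_const (p := e) (Or.inl hc)).congr_deriv ?_
  rw [rpow_sub_one hc]
  ring

/-- The friction `ν cot (θ/2) - μ tan (θ/2)` of the Jacobi equation in the variable `θ`, where
`ν = a + 1/2` and `μ = b + 1/2` for the Jacobi weight with exponents `a` and `b`. -/
def jacobiFriction (ν μ θ : ℝ) : ℝ :=
  ν * (cos (θ / 2) / sin (θ / 2)) - μ * (sin (θ / 2) / cos (θ / 2))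

lemma jacobiFriction_pi_sub (ν μ θ : ℝ) :
    jacobiFriction ν μ (π - θ) = -jacobiFriction μ ν θ := by
  rw [jacobiFriction, jacobiFriction, sin_half_pi_sub, cos_half_pi_sub, neg_sub]

lemma hasDerivAt_jacobiFriction (ν μ : ℝ) (hθ : θ ∈ Ioo 0 π) :
    HasDerivAt (jacobiFriction ν μ)
      (-(ν / 2 / sin (θ / 2) ^ 2 + μ / 2 / cos (θ / 2) ^ 2)) θ := by
  have hs := (sin_half_pos hθ).ne'
  have hc := (cos_half_pos hθ).ne'
  refine ((((hasDerivAt_cos_half θ).div (hasDerivAt_sin_half θ) hs).const_mul ν).sub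
    (((hasDerivAt_sin_half θ).div (hasDerivAt_cos_half θ) hc).const_mul μ)).congr_deriv ?_
  field_simp
  linear_combination (-ν * cos (θ / 2) ^ 2 - μ * sin (θ / 2) ^ 2) * sin_sq_add_cos_sq (θ / 2)

/-- A factor `w` with `w' = jacobiFriction ν μ * w`. -/
def jacobiIntegratingFactor (ν μ θ : ℝ) : ℝ := sin (θ / 2) ^ (2 * ν) * cos (θ / 2) ^ (2 * μ)

lemma hasDerivAt_jacobiIntegratingFactor (ν μ : ℝ) (hθ : θ ∈ Ioo 0 π) :
    HasDerivAt (jacobiIntegratingFactor ν μ)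
      (jacobiFriction ν μ θ * jacobiIntegratingFactor ν μ θ) θ := by
  refine ((hasDerivAt_sin_half_rpow (2 * ν) hθ).mul
    (hasDerivAt_cos_half_rpow (2 * μ) hθ)).congr_deriv ?_
  rw [jacobiFriction, jacobiIntegratingFactor]
  ring

/-- The equation satisfied by `θ ↦ P (cos θ)` when `P` is an eigenfunction of the Jacobi operator
with eigenvalue `ω²`. -/
structure IsJacobiOscillator (ν μ ω : ℝ) (y z : ℝ → ℝ) : Prop
    extends IsDampedOscillator (jacobiFriction ν μ) ω (Ioo 0 π) y z where
  snd_zero : z 0 = 0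
  snd_pi : z π = 0

namespace IsJacobiOscillator

lemma reflect (h : IsJacobiOscillator ν μ ω y z) :
    IsJacobiOscillator μ ν ω (fun θ ↦ y (π - θ)) (fun θ ↦ -z (π - θ)) where
  hasDerivAt_fst t := by
    simpa using (h.hasDerivAt_fst (π - t)).comp_const_sub π t
  continuous_snd := (h.continuous_snd.comp (continuous_const.sub continuous_id)).neg
  hasDerivAt_snd t ht := by
    refine ((h.hasDerivAt_snd (π - t) (pi_sub_mem_Ioo ht)).comp_const_sub π t).neg.congr_deriv ?_
    rw [jacobiFriction_pi_sub]
    ring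
  snd_zero := by simp [h.snd_pi]
  snd_pi := by simp [h.snd_zero]

lemma energy_reflect (ω : ℝ) (y z : ℝ → ℝ) (θ : ℝ) :
    oscillatorEnergy ω (fun θ ↦ y (π - θ)) (fun θ ↦ -z (π - θ)) θ
      = oscillatorEnergy ω y z (π - θ) := by
  simp only [oscillatorEnergy, neg_sq]

lemma monotoneOn_energy_mul_sin (hν : 0 ≤ ν) (hμ : 0 ≤ μ) (h : IsJacobiOscillator ν μ ω y z) :
    MonotoneOn (fun θ ↦ oscillatorEnergy ω y z θ * sin (θ / 2) ^ (4 * ν)) (Icc 0 π) := by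
  have hcont : Continuous fun θ ↦ sin (θ / 2) ^ (4 * ν) :=
    (continuous_sin.comp (continuous_id.div_const 2)).rpow_const fun _ ↦ Or.inr (by positivity)
  refine IsDampedOscillator.monotoneOn_energy_mul (convex_Icc 0 π)
    (g' := fun θ ↦ 4 * ν / 2 * (cos (θ / 2) / sin (θ / 2)) * sin (θ / 2) ^ (4 * ν))
    (interior_Icc (a := (0 : ℝ)) ▸ h.toIsDampedOscillator) hcont.continuousOn ?_ ?_ ?_
  all_goals
    rw [interior_Icc]
    intro t ht
    have hs := sin_half_pos ht
    have hc := cos_half_pos ht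
  · exact hasDerivAt_sin_half_rpow (4 * ν) ht
  · positivity
  · refine mul_le_mul_of_nonneg_right ?_ (by positivity)
    have : 0 ≤ μ * (sin (t / 2) / cos (t / 2)) := by positivity
    rw [jacobiFriction]
    linarith

lemma antitoneOn_energy_mul_cos (hν : 0 ≤ ν) (hμ : 0 ≤ μ) (h : IsJacobiOscillator ν μ ω y z) :
    AntitoneOn (fun θ ↦ oscillatorEnergy ω y z θ * cos (θ / 2) ^ (4 * μ)) (Icc 0 π) := by
  intro θ₁ h₁ θ₂ h₂ hle
  have := h.reflect.monotoneOn_energy_mul_sin hμ hν (pi_sub_mem_Icc h₂) (pi_sub_mem_Icc h₁)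
    (sub_le_sub_left hle π)
  simpa only [energy_reflect, sin_half_pi_sub, sub_sub_cancel] using this

end IsJacobiOscillator

namespace IsJacobiOscillator

lemma energy_le_energy_zero (hν : 0 ≤ ν) (hμ : 0 ≤ μ) (h : IsJacobiOscillator ν μ ω y z)
    (hθ : θ ∈ Icc 0 (2 * π / 3)) :
    oscillatorEnergy ω y z θ ≤ (2 ^ (2 * μ)) ^ 2 * oscillatorEnergy ω y z 0 := by
  have hpi := pi_pos
  have hcos := half_le_cos_half hθ
  have hanti := h.antitoneOn_energy_mul_cos hν hμ (left_mem_Icc.2 pi_pos.le)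
    ⟨hθ.1, by linarith [hθ.2]⟩ hθ.1
  simp only [zero_div, cos_zero, one_rpow, mul_one] at hanti
  calc oscillatorEnergy ω y z θ
      ≤ (2 * cos (θ / 2)) ^ (4 * μ) * oscillatorEnergy ω y z θ :=
        le_mul_of_one_le_left (oscillatorEnergy_nonneg _ _ _ _)
          (one_le_rpow (by linarith) (by positivity))
    _ = (2 ^ (2 * μ)) ^ 2 * (oscillatorEnergy ω y z θ * cos (θ / 2) ^ (4 * μ)) := by
        rw [mul_rpow two_pos.le (by linarith), ← rpow_mul_natCast two_pos.le]
        push_cast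
        ring_nf
    _ ≤ (2 ^ (2 * μ)) ^ 2 * oscillatorEnergy ω y z 0 := by gcongr

lemma energy_le_rpow_mul (hν : 0 ≤ ν) (hμ : 0 ≤ μ) (h : IsJacobiOscillator ν μ ω y z)
    {θ₁ θ₂ : ℝ} (h₁ : 0 < θ₁) (hle : θ₁ ≤ θ₂) (h₂ : θ₂ ≤ π) :
    oscillatorEnergy ω y z θ₁ ≤ (π * θ₂ / θ₁) ^ (4 * ν) * oscillatorEnergy ω y z θ₂ := by
  have := pi_pos
  have hE₁ := oscillatorEnergy_nonneg ω y z θ₁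
  have hE₂ := oscillatorEnergy_nonneg ω y z θ₂
  have hsin₁ : θ₁ / π ≤ sin (θ₁ / 2) := by
    rw [div_le_iff₀' pi_pos]
    exact le_pi_mul_sin_half ⟨h₁.le, hle.trans h₂⟩
  have hsin₂ : sin (θ₂ / 2) ≤ θ₂ := (sin_le (by linarith)).trans (by linarith)
  have hchain : oscillatorEnergy ω y z θ₁ * (θ₁ / π) ^ (4 * ν)
      ≤ oscillatorEnergy ω y z θ₂ * θ₂ ^ (4 * ν) :=
    calc oscillatorEnergy ω y z θ₁ * (θ₁ / π) ^ (4 * ν)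
        ≤ oscillatorEnergy ω y z θ₁ * sin (θ₁ / 2) ^ (4 * ν) := by gcongr
      _ ≤ oscillatorEnergy ω y z θ₂ * sin (θ₂ / 2) ^ (4 * ν) :=
          h.monotoneOn_energy_mul_sin hν hμ ⟨h₁.le, hle.trans h₂⟩ ⟨h₁.le.trans hle, h₂⟩ hle
      _ ≤ oscillatorEnergy ω y z θ₂ * θ₂ ^ (4 * ν) := by
          have := sin_half_nonneg ⟨h₁.le.trans hle, h₂⟩
          gcongr
  rw [← le_div_iff₀ (by positivity)] at hchain
  refine hchain.trans_eq ?_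
  rw [mul_div_assoc, ← div_rpow (by linarith) (by positivity), mul_comm, div_div_eq_mul_div,
    mul_comm θ₂]

-- `y` cannot have decayed at distance `δ` from the endpoint, since its velocity is `O(ω |y 0|)`.
lemma exists_energy_le_mul_energy_div (hν : 0 ≤ ν) (hμ : 0 ≤ μ) {κ : ℝ} (hκ : 1 ≤ κ) :
    ∃ C, 0 < C ∧ ∀ {ω y z}, IsJacobiOscillator ν μ ω y z → 0 < ω → κ / ω ≤ 2 * π / 3 →
      ∀ θ ∈ Icc 0 (2 * π / 3), oscillatorEnergy ω y z θ ≤ C * oscillatorEnergy ω y z (κ / ω) := by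
  have hpi := pi_pos
  set M : ℝ := 2 ^ (2 * μ)
  have hM : 1 ≤ M := one_le_rpow one_le_two (by positivity)
  refine ⟨M ^ 2 * (4 * (π * κ * (2 * M)) ^ (4 * ν)), by positivity,
    fun {ω y z} h hω hκω θ hθ ↦ ?_⟩
  set δ : ℝ := 1 / (2 * M * ω)
  have hδ : δ ≤ κ / ω := by
    rw [div_le_div_iff₀ (by positivity) hω]
    nlinarith [mul_le_mul hκ hM zero_le_one (by linarith)]
  have hstart : oscillatorEnergy ω y z 0 ≤ 4 * oscillatorEnergy ω y z δ :=
    h.energy_le_four_mul h.snd_zero hω.le (by positivity) (by positivity)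
      (fun t ht ↦ h.energy_le_energy_zero hν hμ ⟨ht.1, ht.2.trans (hδ.trans hκω)⟩)
      (by rw [sub_zero, mul_one_div_cancel (by positivity)])
  have hgrow := h.energy_le_rpow_mul hν hμ (θ₁ := δ) (by positivity) hδ (by linarith)
  have hratio : π * (κ / ω) / δ = π * κ * (2 * M) := by
    simp only [δ]
    field_simp
  rw [hratio] at hgrow
  calc oscillatorEnergy ω y z θ ≤ M ^ 2 * oscillatorEnergy ω y z 0 :=
        h.energy_le_energy_zero hν hμ hθ
    _ ≤ M ^ 2 * (4 * ((π * κ * (2 * M)) ^ (4 * ν) * oscillatorEnergy ω y z (κ / ω))) := by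
        gcongr
        exact hstart.trans (by gcongr)
    _ = _ := by ring

end IsJacobiOscillator

lemma abs_jacobiFriction_le (hν : 0 ≤ ν) (hμ : 0 ≤ μ) (hω : 8 * μ ≤ ω) (hω0 : 0 < ω)
    (hθ : θ ∈ Icc (π * (4 * ν + 1) / ω) (2 * π / 3)) : |jacobiFriction ν μ θ| ≤ ω / 4 := by
  have hpi := pi_pos
  have hθ0 : 0 < θ := (by positivity : 0 < π * (4 * ν + 1) / ω).trans_le hθ.1
  have hs := sin_half_pos ⟨hθ0, by linarith [hθ.2]⟩
  have hc := half_le_cos_half ⟨hθ0.le, hθ.2⟩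
  have hcot : ν * (cos (θ / 2) / sin (θ / 2)) ≤ ω / 4 := by
    have hsin := hθ.1.trans (le_pi_mul_sin_half ⟨hθ0.le, by linarith [hθ.2]⟩)
    rw [mul_div_assoc, mul_le_mul_iff_right₀ pi_pos, div_le_iff₀' hω0] at hsin
    rw [← mul_div_assoc, div_le_iff₀ hs]
    nlinarith [mul_le_of_le_one_right hν (cos_le_one (θ / 2))]
  have htan : μ * (sin (θ / 2) / cos (θ / 2)) ≤ ω / 4 := by
    rw [← mul_div_assoc, div_le_iff₀ (by linarith)]
    nlinarith [mul_le_of_le_one_right hμ (sin_le_one (θ / 2))]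
  have : 0 ≤ ν * (cos (θ / 2) / sin (θ / 2)) := by positivity
  have : 0 ≤ μ * (sin (θ / 2) / cos (θ / 2)) := by positivity
  rw [jacobiFriction, abs_le]
  constructor <;> linarith

namespace IsJacobiOscillator

lemma factor_mul_energy_le (hν : 0 ≤ ν) (hμ : 0 ≤ μ) (h : IsJacobiOscillator ν μ ω y z)
    (hω : 8 * μ ≤ ω) (hω0 : 0 < ω) {θ₁ θ₂ : ℝ} (h₁ : π * (4 * ν + 1) / ω ≤ θ₁)
    (hle : θ₁ ≤ θ₂) (h₂ : θ₂ ≤ 2 * π / 3) :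
    jacobiIntegratingFactor ν μ θ₁ * oscillatorEnergy ω y z θ₁ ≤
      4 * (jacobiIntegratingFactor ν μ θ₂ * oscillatorEnergy ω y z θ₂) := by
  have hpi := pi_pos
  have hsub : Icc θ₁ θ₂ ⊆ Ioo 0 π := fun t ht ↦
    ⟨(by positivity : 0 < π * (4 * ν + 1) / ω).trans_le (h₁.trans ht.1), by linarith [ht.2]⟩
  refine (h.toIsDampedOscillator.mono hsub).energy_mul_le_four_mul hω0 hle
    (fun t ht ↦ abs_jacobiFriction_le hν hμ hω hω0 ⟨h₁.trans ht.1, ht.2.trans h₂⟩)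
    (fun t ht ↦ hasDerivAt_jacobiFriction ν μ (hsub ht)) (fun t _ ↦ ?_)
    (fun t ht ↦ hasDerivAt_jacobiIntegratingFactor ν μ (hsub ht)) (fun t ht ↦ ?_)
  · exact neg_nonpos.2 (by positivity)
  · have := sin_half_pos (hsub ht)
    have := cos_half_pos (hsub ht)
    rw [jacobiIntegratingFactor]
    positivity

lemma energy_mul_sin_le (hν : 0 ≤ ν) (hμ : 0 ≤ μ) (h : IsJacobiOscillator ν μ ω y z)
    (hω : 8 * μ ≤ ω) (hω0 : 0 < ω) {θ₁ θ₂ : ℝ} (h₁ : π * (4 * ν + 1) / ω ≤ θ₁)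
    (hle : θ₁ ≤ θ₂) (h₂ : θ₂ ≤ 2 * π / 3) :
    oscillatorEnergy ω y z θ₁ * sin (θ₁ / 2) ^ (2 * ν) ≤
      2 ^ (2 * μ) * (4 * oscillatorEnergy ω y z θ₂) := by
  have := pi_pos
  have hpos : 0 < θ₁ := (by positivity : 0 < π * (4 * ν + 1) / ω).trans_le h₁
  have hs₁ := sin_half_pos ⟨hpos, by linarith⟩
  have hc₁ := half_le_cos_half ⟨hpos.le, hle.trans h₂⟩
  have hs₂ := sin_half_pos ⟨hpos.trans_le hle, by linarith⟩
  have hc₂ := half_le_cos_half ⟨hpos.le.trans hle, h₂⟩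
  have hE₁ := oscillatorEnergy_nonneg ω y z θ₁
  have hE₂ := oscillatorEnergy_nonneg ω y z θ₂
  have hw₂ : jacobiIntegratingFactor ν μ θ₂ ≤ 1 :=
    mul_le_one₀ (rpow_le_one hs₂.le (sin_le_one _) (by positivity))
      (rpow_nonneg (by linarith) _) (rpow_le_one (by linarith) (cos_le_one _) (by positivity))
  calc oscillatorEnergy ω y z θ₁ * sin (θ₁ / 2) ^ (2 * ν)
      ≤ oscillatorEnergy ω y z θ₁ * sin (θ₁ / 2) ^ (2 * ν) * (2 * cos (θ₁ / 2)) ^ (2 * μ) :=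
        le_mul_of_one_le_right (by positivity) (one_le_rpow (by linarith) (by positivity))
    _ = 2 ^ (2 * μ) * (jacobiIntegratingFactor ν μ θ₁ * oscillatorEnergy ω y z θ₁) := by
        rw [mul_rpow two_pos.le (by linarith), jacobiIntegratingFactor]
        ring
    _ ≤ 2 ^ (2 * μ) * (4 * (jacobiIntegratingFactor ν μ θ₂ * oscillatorEnergy ω y z θ₂)) :=
        mul_le_mul_of_nonneg_left (h.factor_mul_energy_le hν hμ hω hω0 h₁ hle h₂) (by positivity)
    _ ≤ 2 ^ (2 * μ) * (4 * oscillatorEnergy ω y z θ₂) := by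
        gcongr
        exact mul_le_of_le_one_left hE₂ hw₂

end IsJacobiOscillator

/-- The envelope `(sin (θ/2) + ε)^ν (cos (θ/2) + ε)^μ`: solutions of the Jacobi equation of
frequency `ω` have size at most its inverse, for `ε` of order `ω⁻¹`. -/
def jacobiEnvelope (ν μ ε θ : ℝ) : ℝ := (sin (θ / 2) + ε) ^ ν * (cos (θ / 2) + ε) ^ μ

lemma jacobiEnvelope_pi_sub (ν μ ε θ : ℝ) :
    jacobiEnvelope ν μ ε (π - θ) = jacobiEnvelope μ ν ε θ := by
  rw [jacobiEnvelope, jacobiEnvelope, sin_half_pi_sub, cos_half_pi_sub, mul_comm]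

lemma jacobiEnvelope_pos {ε : ℝ} (hε : 0 < ε) (hθ : θ ∈ Icc 0 π) : 0 < jacobiEnvelope ν μ ε θ :=
  mul_pos (rpow_pos_of_pos (add_pos_of_nonneg_of_pos (sin_half_nonneg hθ) hε) _)
    (rpow_pos_of_pos (add_pos_of_nonneg_of_pos (cos_half_nonneg hθ) hε) _)

lemma jacobiEnvelope_sq_le (hμ : 0 ≤ μ) {ε : ℝ} (hε0 : 0 ≤ ε) (hε1 : ε ≤ 1) (hθ : θ ∈ Icc 0 π) :
    jacobiEnvelope ν μ ε θ ^ 2 ≤ 2 ^ (2 * μ) * (sin (θ / 2) + ε) ^ (2 * ν) := by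
  have hs := sin_half_nonneg hθ
  have hc := cos_half_nonneg hθ
  have hc1 := cos_le_one (θ / 2)
  rw [jacobiEnvelope, mul_pow, ← rpow_mul_natCast (by positivity),
    ← rpow_mul_natCast (by positivity), mul_comm, Nat.cast_two, mul_comm ν, mul_comm μ]
  gcongr
  linarith

namespace IsJacobiOscillator

lemma energy_mul_sin_add_le (hν : 0 ≤ ν) (hμ : 0 ≤ μ) (h : IsJacobiOscillator ν μ ω y z)
    (hω : 8 * μ ≤ ω) (hω0 : 0 < ω) {θ₁ θ₂ : ℝ} (h₁ : π * (4 * ν + 1) / ω ≤ θ₁)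
    (hle : θ₁ ≤ θ₂) (h₂ : θ₂ ≤ 2 * π / 3) :
    oscillatorEnergy ω y z θ₁ * (sin (θ₁ / 2) + 1 / ω) ^ (2 * ν) ≤
      2 ^ (2 * ν) * (2 ^ (2 * μ) * (4 * oscillatorEnergy ω y z θ₂)) := by
  have := pi_pos
  have hpos : 0 < θ₁ := (by positivity : 0 < π * (4 * ν + 1) / ω).trans_le h₁
  have hθ₁ : θ₁ ∈ Icc 0 π := ⟨hpos.le, by linarith⟩
  have hs₁ := sin_half_nonneg hθ₁
  have hE₁ := oscillatorEnergy_nonneg ω y z θ₁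
  have hfreq : 1 / ω ≤ sin (θ₁ / 2) := by
    have hsin := h₁.trans (le_pi_mul_sin_half hθ₁)
    rw [mul_div_assoc, mul_le_mul_iff_right₀ pi_pos] at hsin
    exact (div_le_div_of_nonneg_right (by linarith) hω0.le).trans hsin
  calc oscillatorEnergy ω y z θ₁ * (sin (θ₁ / 2) + 1 / ω) ^ (2 * ν)
      ≤ oscillatorEnergy ω y z θ₁ * (2 * sin (θ₁ / 2)) ^ (2 * ν) := by
        gcongr
        linarith
    _ = 2 ^ (2 * ν) * (oscillatorEnergy ω y z θ₁ * sin (θ₁ / 2) ^ (2 * ν)) := by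
        rw [mul_rpow two_pos.le hs₁]
        ring
    _ ≤ _ := mul_le_mul_of_nonneg_left (h.energy_mul_sin_le hν hμ hω hω0 h₁ hle h₂)
        (by positivity)

lemma exists_energy_mul_sin_add_le (hν : 0 ≤ ν) (hμ : 0 ≤ μ) :
    ∃ C, 0 < C ∧ ∀ {ω y z}, IsJacobiOscillator ν μ ω y z → 12 * (ν + μ) + 3 ≤ ω →
      ∀ θ₂ ∈ Icc (π / 3) (2 * π / 3), ∀ θ₁ ∈ Icc 0 θ₂,
        oscillatorEnergy ω y z θ₁ * (sin (θ₁ / 2) + 1 / ω) ^ (2 * ν) ≤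
          C * oscillatorEnergy ω y z θ₂ := by
  have hpi := pi_pos
  obtain ⟨C, hC, hnear⟩ := exists_energy_le_mul_energy_div hν hμ
    (κ := π * (4 * ν + 1)) (by nlinarith [pi_gt_three])
  set A : ℝ := 2 ^ (2 * ν) * (2 ^ (2 * μ) * 4)
  refine ⟨A + C * A, by positivity, fun {ω y z} h hω θ₂ hθ₂ θ₁ hθ₁ ↦ ?_⟩
  have hω0 : 0 < ω := by linarith
  have hE₂ := oscillatorEnergy_nonneg ω y z θ₂
  have hbulk (t : ℝ) (ht : π * (4 * ν + 1) / ω ≤ t) (htle : t ≤ θ₂) :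
      oscillatorEnergy ω y z t * (sin (t / 2) + 1 / ω) ^ (2 * ν)
        ≤ A * oscillatorEnergy ω y z θ₂ :=
    (h.energy_mul_sin_add_le hν hμ (by linarith) hω0 ht htle hθ₂.2).trans_eq (by ring)
  have hcut : π * (4 * ν + 1) / ω ≤ π / 3 := by
    rw [div_le_div_iff₀ hω0 three_pos, mul_assoc]
    exact mul_le_mul_of_nonneg_left (by linarith) hpi.le
  rcases le_total (π * (4 * ν + 1) / ω) θ₁ with hfar | hclose
  · exact (hbulk θ₁ hfar hθ₁.2).trans
      (mul_le_mul_of_nonneg_right (le_add_of_nonneg_right (by positivity)) hE₂)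
  · have hs := sin_half_nonneg ⟨hθ₁.1, by linarith [hθ₁.2, hθ₂.2]⟩
    have hsin : sin (θ₁ / 2) ≤ sin (π * (4 * ν + 1) / ω / 2) :=
      sin_le_sin_of_le_of_le_pi_div_two (by linarith [hθ₁.1]) (by linarith) (by linarith)
    calc oscillatorEnergy ω y z θ₁ * (sin (θ₁ / 2) + 1 / ω) ^ (2 * ν)
        ≤ C * oscillatorEnergy ω y z (π * (4 * ν + 1) / ω) *
            (sin (π * (4 * ν + 1) / ω / 2) + 1 / ω) ^ (2 * ν) :=
          mul_le_mul (hnear h hω0 (by linarith) θ₁ ⟨hθ₁.1, hθ₁.2.trans hθ₂.2⟩) (by gcongr)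
            (by positivity) (mul_nonneg hC.le (oscillatorEnergy_nonneg _ _ _ _))
      _ ≤ C * (A * oscillatorEnergy ω y z θ₂) := by
          rw [mul_assoc]
          exact mul_le_mul_of_nonneg_left (hbulk _ le_rfl (hcut.trans hθ₂.1)) hC.le
      _ ≤ (A + C * A) * oscillatorEnergy ω y z θ₂ := by
          have : 0 ≤ A * oscillatorEnergy ω y z θ₂ := by positivity
          linarith

lemma exists_energy_mul_envelope_sq_le_left (hν : 0 ≤ ν) (hμ : 0 ≤ μ) :
    ∃ C, 0 < C ∧ ∀ {ω y z}, IsJacobiOscillator ν μ ω y z → 12 * (ν + μ) + 3 ≤ ω →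
      ∀ θ₂ ∈ Icc (π / 3) (2 * π / 3), ∀ θ₁ ∈ Icc 0 θ₂,
        oscillatorEnergy ω y z θ₁ * jacobiEnvelope ν μ (1 / ω) θ₁ ^ 2 ≤
          C * oscillatorEnergy ω y z θ₂ := by
  obtain ⟨C, hC, hleft⟩ := exists_energy_mul_sin_add_le hν hμ
  refine ⟨2 ^ (2 * μ) * C, by positivity, fun {ω y z} h hω θ₂ hθ₂ θ₁ hθ₁ ↦ ?_⟩
  have hω0 : 0 < ω := by linarith
  have hε : 1 / ω ≤ 1 := (div_le_one hω0).2 (by linarith)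
  calc oscillatorEnergy ω y z θ₁ * jacobiEnvelope ν μ (1 / ω) θ₁ ^ 2
      ≤ oscillatorEnergy ω y z θ₁ * (2 ^ (2 * μ) * (sin (θ₁ / 2) + 1 / ω) ^ (2 * ν)) :=
        mul_le_mul_of_nonneg_left (jacobiEnvelope_sq_le hμ (by positivity) hε
          ⟨hθ₁.1, by linarith [hθ₁.2, hθ₂.2, pi_pos]⟩) (oscillatorEnergy_nonneg _ _ _ _)
    _ ≤ 2 ^ (2 * μ) * C * oscillatorEnergy ω y z θ₂ := by
        rw [mul_left_comm, mul_assoc]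
        exact mul_le_mul_of_nonneg_left (hleft h hω θ₂ hθ₂ θ₁ hθ₁) (by positivity)

theorem exists_energy_mul_envelope_sq_le (hν : 0 ≤ ν) (hμ : 0 ≤ μ) :
    ∃ C, 0 < C ∧ ∀ {ω y z}, IsJacobiOscillator ν μ ω y z → 12 * (ν + μ) + 3 ≤ ω →
      ∀ θ₂ ∈ Icc (π / 3) (2 * π / 3), ∀ θ₁ ∈ Icc 0 π,
        oscillatorEnergy ω y z θ₁ * jacobiEnvelope ν μ (1 / ω) θ₁ ^ 2 ≤
          C * oscillatorEnergy ω y z θ₂ := by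
  obtain ⟨C₁, hC₁, hleft⟩ := exists_energy_mul_envelope_sq_le_left hν hμ
  obtain ⟨C₂, _, hright⟩ := exists_energy_mul_envelope_sq_le_left hμ hν
  refine ⟨max C₁ C₂, lt_max_of_lt_left hC₁, fun {ω y z} h hω θ₂ hθ₂ θ₁ hθ₁ ↦ ?_⟩
  have hE₂ := oscillatorEnergy_nonneg ω y z θ₂
  rcases le_total θ₁ θ₂ with hle | hle
  · exact (hleft h hω θ₂ hθ₂ θ₁ ⟨hθ₁.1, hle⟩).trans
      (mul_le_mul_of_nonneg_right (le_max_left _ _) hE₂)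
  · have hreflect := hright h.reflect (by rwa [add_comm μ]) (π - θ₂)
      ⟨by linarith [hθ₂.2], by linarith [hθ₂.1]⟩ (π - θ₁)
      ⟨sub_nonneg.2 hθ₁.2, sub_le_sub_left hle π⟩
    simp only [energy_reflect, jacobiEnvelope_pi_sub, sub_sub_cancel] at hreflect
    exact hreflect.trans (mul_le_mul_of_nonneg_right (le_max_right _ _) hE₂)

end IsJacobiOscillator

end JacobiOscillator

section PointwiseBounds
open Polynomial

variable {a b c : ℝ} {p : ℕ → ℝ[X]}

lemma isJacobiOscillator_of_pearsonOp {f : ℝ[X]} {ω : ℝ}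
    (hf : pearsonOp a b (derivative f) = -(ω ^ 2 • f)) :
    IsJacobiOscillator (a + 1 / 2) (b + 1 / 2) ω (fun θ ↦ f.eval (cos θ))
      (fun θ ↦ -sin θ * (derivative f).eval (cos θ)) where
  hasDerivAt_fst θ := ((f.hasDerivAt (cos θ)).comp θ (hasDerivAt_cos θ)).congr_deriv (mul_comm _ _)
  continuous_snd := continuous_sin.neg.mul ((derivative f).continuous.comp continuous_cos)
  hasDerivAt_snd θ hθ := by
    refine ((hasDerivAt_sin θ).neg.mul
      (((derivative f).hasDerivAt (cos θ)).comp θ (hasDerivAt_cos θ))).congr_deriv ?_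
    have hs := (sin_half_pos hθ).ne'
    have hc := (cos_half_pos hθ).ne'
    have hode := congrArg (eval (cos θ)) hf
    simp only [pearsonOp, eval_add, eval_sub, eval_mul, eval_neg, eval_smul, eval_pow, eval_X,
      eval_C, eval_one, smul_eq_mul, ← sin_sq] at hode
    have hsin : sin θ = 2 * sin (θ / 2) * cos (θ / 2) := by rw [← sin_two_mul]; ring_nf
    have hcos : cos θ = cos (θ / 2) ^ 2 - sin (θ / 2) ^ 2 := by rw [← cos_two_mul']; ring_nf
    have hfriction : jacobiFriction (a + 1 / 2) (b + 1 / 2) θ * sin θ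
        = (a + b + 1) * cos θ + (a - b) := by
      rw [jacobiFriction, hsin, hcos]
      field_simp
      linear_combination (a - b) * sin_sq_add_cos_sq (θ / 2)
    simp only [Function.comp_apply, Pi.neg_apply]
    linear_combination hode - (derivative f).eval (cos θ) * hfriction
  snd_zero := by simp
  snd_pi := by simp

/-- The oscillator energy of frequency `ω` of the function `θ ↦ f (cos θ)`. -/
def trigEnergy (ω : ℝ) (f : ℝ[X]) : ℝ → ℝ :=
  oscillatorEnergy ω (fun θ ↦ f.eval (cos θ)) fun θ ↦ -sin θ * (derivative f).eval (cos θ)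

lemma trigEnergy_eq (ω : ℝ) (f : ℝ[X]) (θ : ℝ) :
    trigEnergy ω f θ =
      (1 - cos θ ^ 2) * (derivative f).eval (cos θ) ^ 2 + ω ^ 2 * f.eval (cos θ) ^ 2 := by
  rw [trigEnergy, oscillatorEnergy, neg_mul, neg_sq, mul_pow, mul_pow, sin_sq]

lemma sq_mul_eval_sq_le_trigEnergy (ω : ℝ) (f : ℝ[X]) (θ : ℝ) :
    ω ^ 2 * f.eval (cos θ) ^ 2 ≤ trigEnergy ω f θ := by
  rw [trigEnergy_eq, ← sin_sq]
  exact le_add_of_nonneg_left (by positivity)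

lemma sq_sin_mul_eval_derivative_le_trigEnergy (ω : ℝ) (f : ℝ[X]) (θ : ℝ) :
    (sin θ * (derivative f).eval (cos θ)) ^ 2 ≤ trigEnergy ω f θ := by
  rw [trigEnergy_eq, ← sin_sq, mul_pow]
  exact le_add_of_nonneg_right (by positivity)

lemma continuous_trigEnergy (ω : ℝ) (f : ℝ[X]) : Continuous (trigEnergy ω f) := by
  unfold trigEnergy oscillatorEnergy
  fun_prop

lemma trigEnergy_mono {ω₁ ω₂ : ℝ} (h₁ : 0 ≤ ω₁) (hle : ω₁ ≤ ω₂) (f : ℝ[X]) (θ : ℝ) :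
    trigEnergy ω₁ f θ ≤ trigEnergy ω₂ f θ := by
  rw [trigEnergy_eq, trigEnergy_eq]
  gcongr

lemma jacobiEigenvalue_mem_Icc (hab : 0 ≤ a + b + 1) {n : ℕ} (hn : 1 ≤ n) :
    jacobiEigenvalue a b n ∈ Icc ((n : ℝ) ^ 2) ((a + b + 2) * n ^ 2) := by
  have hn' : (1 : ℝ) ≤ n := by exact_mod_cast hn
  rw [jacobiEigenvalue]
  constructor <;> nlinarith [mul_nonneg hab (sub_nonneg.2 hn')]

lemma continuous_jacobiEnvelope {ν μ : ℝ} (hν : 0 ≤ ν) (hμ : 0 ≤ μ) (ε : ℝ) :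
    Continuous (jacobiEnvelope ν μ ε) :=
  (((continuous_sin.comp (continuous_id.div_const 2)).add continuous_const).rpow_const
      fun _ ↦ Or.inr hν).mul
    (((continuous_cos.comp (continuous_id.div_const 2)).add continuous_const).rpow_const
      fun _ ↦ Or.inr hμ)

lemma jacobiEnvelope_mono {ν μ ε₁ ε₂ θ : ℝ} (hν : 0 ≤ ν) (hμ : 0 ≤ μ) (hε : 0 ≤ ε₁)
    (hle : ε₁ ≤ ε₂) (hθ : θ ∈ Icc 0 π) : jacobiEnvelope ν μ ε₁ θ ≤ jacobiEnvelope ν μ ε₂ θ := by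
  have := sin_half_nonneg hθ
  have := cos_half_nonneg hθ
  have := hε.trans hle
  unfold jacobiEnvelope
  gcongr

lemma jacobiEnvelope_mul_le {ν μ ε θ r : ℝ} (hν : 0 ≤ ν) (hμ : 0 ≤ μ) (hε : 0 ≤ ε) (hr : 1 ≤ r)
    (hθ : θ ∈ Icc 0 π) :
    jacobiEnvelope ν μ (r * ε) θ ≤ r ^ (ν + μ) * jacobiEnvelope ν μ ε θ := by
  have hs := sin_half_nonneg hθ
  have hc := cos_half_nonneg hθ
  have hr0 : 0 < r := by linarith
  calc jacobiEnvelope ν μ (r * ε) θ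
      ≤ (r * (sin (θ / 2) + ε)) ^ ν * (r * (cos (θ / 2) + ε)) ^ μ := by
        unfold jacobiEnvelope
        gcongr <;> nlinarith
    _ = r ^ (ν + μ) * jacobiEnvelope ν μ ε θ := by
        rw [mul_rpow hr0.le (by positivity), mul_rpow hr0.le (by positivity), rpow_add hr0,
          jacobiEnvelope]
        ring

lemma exists_forall_le_of_eventually_le {X : Type*} [TopologicalSpace X] {s : Set X}
    (hs : IsCompact s) {f : ℕ → X → ℝ} (hf : ∀ n, ContinuousOn (f n) s) {C : ℝ}
    (hC : ∀ᶠ n in atTop, ∀ x ∈ s, f n x ≤ C) : ∃ C', 0 < C' ∧ ∀ n, ∀ x ∈ s, f n x ≤ C' := by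
  obtain ⟨n₀, hn₀⟩ := eventually_atTop.1 hC
  obtain ⟨B, hB⟩ := ((Set.finite_Iio n₀).bddAbove_biUnion).2
    fun n _ ↦ hs.bddAbove_image (hf n)
  refine ⟨max 1 (max B C), lt_max_of_lt_left one_pos, fun n x hx ↦ le_max_of_le_right ?_⟩
  rcases lt_or_ge n n₀ with hlt | hge
  · exact le_max_of_le_left (hB (mem_biUnion hlt (mem_image_of_mem _ hx)))
  · exact le_max_of_le_right (hn₀ n hge x hx)

namespace IsONPS

lemma exists_trigEnergy_le (ha : -1 < a) (hb : -1 < b) (hc : 0 < c)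
    (hp : IsONPS (jacobiWeight c a b) p) :
    ∃ M, 0 < M ∧ ∀ n, ∃ θ ∈ Icc (π / 3) (2 * π / 3),
      trigEnergy (√(jacobiEigenvalue a b n)) (p n) θ ≤ M * jacobiEigenvalue a b n := by
  obtain ⟨M, hM, henergy⟩ := hp.exists_energy_le ha hb hc
  refine ⟨M, hM, fun n ↦ ?_⟩
  obtain ⟨x, hx, hle⟩ := henergy n
  have hcos : cos (2 * π / 3) = -(1 / 2) := by
    rw [show 2 * π / 3 = π - π / 3 by ring, cos_pi_sub, cos_pi_div_three]
  refine ⟨arccos x, ⟨?_, ?_⟩, ?_⟩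
  · rw [← arccos_cos (x := π / 3) (by positivity) (by linarith [pi_pos]), cos_pi_div_three]
    exact arccos_le_arccos hx.2
  · rw [← arccos_cos (x := 2 * π / 3) (by positivity) (by linarith [pi_pos]), hcos]
    exact arccos_le_arccos hx.1
  · rwa [trigEnergy_eq, cos_arccos (by linarith [hx.1]) (by linarith [hx.2]),
      sq_sqrt (jacobiEigenvalue_nonneg ha hb n)]

lemma exists_trigEnergy_mul_envelope_sq_le (ha : -(1 / 2) ≤ a) (hb : -(1 / 2) ≤ b) (hc : 0 < c)
    (hp : IsONPS (jacobiWeight c a b) p) :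
    ∃ C, 0 < C ∧ ∀ᶠ n in atTop, ∀ θ ∈ Icc 0 π,
      trigEnergy (√(jacobiEigenvalue a b n)) (p n) θ *
        jacobiEnvelope (a + 1 / 2) (b + 1 / 2) (1 / √(jacobiEigenvalue a b n)) θ ^ 2 ≤
          C * jacobiEigenvalue a b n := by
  obtain ⟨M, hM, hmean⟩ := hp.exists_trigEnergy_le (by linarith) (by linarith) hc
  obtain ⟨C, hC, hosc⟩ := IsJacobiOscillator.exists_energy_mul_envelope_sq_le
    (show 0 ≤ a + 1 / 2 by linarith) (show 0 ≤ b + 1 / 2 by linarith)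
  obtain ⟨n₀, hn₀⟩ := exists_nat_ge (12 * (a + 1 / 2 + (b + 1 / 2)) + 3)
  refine ⟨C * M, by positivity, eventually_atTop.2 ⟨max 1 n₀, fun n hn θ hθ ↦ ?_⟩⟩
  obtain ⟨θ', hθ', hle⟩ := hmean n
  have heig := jacobiEigenvalue_nonneg (show -1 < a by linarith) (show -1 < b by linarith) n
  have hode := hp.isOrthonormalSequence.pearsonOp_derivative
    (momentFunctional_pearsonOp (by linarith) (by linarith) hp.integrableOn) n
  rw [← sq_sqrt heig] at hode
  have hlarge : 12 * (a + 1 / 2 + (b + 1 / 2)) + 3 ≤ √(jacobiEigenvalue a b n) :=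
    calc _ ≤ (n₀ : ℝ) := hn₀
      _ ≤ n := by exact_mod_cast (le_max_right 1 n₀).trans hn
      _ ≤ √(jacobiEigenvalue a b n) := le_sqrt_of_sq_le
          (jacobiEigenvalue_mem_Icc (by linarith) ((le_max_left 1 n₀).trans hn)).1
  calc _ ≤ C * trigEnergy (√(jacobiEigenvalue a b n)) (p n) θ' :=
        hosc (isJacobiOscillator_of_pearsonOp hode) hlarge θ' hθ' θ hθ
    _ ≤ C * M * jacobiEigenvalue a b n := by
        rw [mul_assoc]
        gcongr

end IsONPS

lemma trigEnergy_mul_envelope_sq_le (ha : -(1 / 2) ≤ a) (hb : -(1 / 2) ≤ b) {n : ℕ} (hn : 1 ≤ n)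
    {C θ : ℝ} (hC : 0 ≤ C) (hθ : θ ∈ Icc 0 π) {f : ℝ[X]}
    (hf : trigEnergy (√(jacobiEigenvalue a b n)) f θ *
      jacobiEnvelope (a + 1 / 2) (b + 1 / 2) (1 / √(jacobiEigenvalue a b n)) θ ^ 2 ≤
        C * jacobiEigenvalue a b n) :
    trigEnergy n f θ * jacobiEnvelope (a + 1 / 2) (b + 1 / 2) (1 / n) θ ^ 2 ≤
      (√(a + b + 2) ^ (a + b + 1)) ^ 2 * (C * (a + b + 2)) * n ^ 2 := by
  have hn0 : (0 : ℝ) < n := by exact_mod_cast hn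
  obtain ⟨hlow, hupp⟩ := jacobiEigenvalue_mem_Icc (show 0 ≤ a + b + 1 by linarith) hn
  set l := jacobiEigenvalue a b n
  have hl : 0 < √l := sqrt_pos.2 (lt_of_lt_of_le (by positivity) hlow)
  have hr : 1 ≤ √(a + b + 2) := one_le_sqrt.2 (by linarith)
  have hfreq : 1 / (n : ℝ) ≤ √(a + b + 2) * (1 / √l) := by
    rw [mul_one_div, div_le_div_iff₀ hn0 hl, one_mul, ← sqrt_sq hn0.le,
      ← sqrt_mul (by linarith)]
    exact sqrt_le_sqrt hupp
  have henv : jacobiEnvelope (a + 1 / 2) (b + 1 / 2) (1 / n) θ ≤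
      √(a + b + 2) ^ (a + b + 1) * jacobiEnvelope (a + 1 / 2) (b + 1 / 2) (1 / √l) θ := by
    refine (jacobiEnvelope_mono (by linarith) (by linarith) (by positivity) hfreq hθ).trans
      ((jacobiEnvelope_mul_le (by linarith) (by linarith) (by positivity) hr hθ).trans_eq ?_)
    ring_nf
  calc trigEnergy n f θ * jacobiEnvelope (a + 1 / 2) (b + 1 / 2) (1 / n) θ ^ 2
      ≤ trigEnergy (√l) f θ * (√(a + b + 2) ^ (a + b + 1) *
          jacobiEnvelope (a + 1 / 2) (b + 1 / 2) (1 / √l) θ) ^ 2 :=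
        mul_le_mul (trigEnergy_mono hn0.le (le_sqrt_of_sq_le hlow) f θ)
          (pow_le_pow_left₀ (jacobiEnvelope_pos (by positivity) hθ).le henv 2) (sq_nonneg _)
          (oscillatorEnergy_nonneg _ _ _ _)
    _ ≤ (√(a + b + 2) ^ (a + b + 1)) ^ 2 * (C * l) := by
        rw [mul_pow, mul_left_comm]
        gcongr
    _ ≤ (√(a + b + 2) ^ (a + b + 1)) ^ 2 * (C * ((a + b + 2) * n ^ 2)) := by gcongr
    _ = _ := by ring

namespace IsONPS

lemma exists_trigEnergy_mul_envelope_sq_le_sq (ha : -(1 / 2) ≤ a) (hb : -(1 / 2) ≤ b)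
    (hc : 0 < c) (hp : IsONPS (jacobiWeight c a b) p) :
    ∃ C, 0 < C ∧ ∀ n : ℕ, ∀ θ ∈ Icc 0 π, trigEnergy (max (n : ℝ) 1) (p n) θ *
      jacobiEnvelope (a + 1 / 2) (b + 1 / 2) (1 / max (n : ℝ) 1) θ ^ 2 ≤
        C * max (n : ℝ) 1 ^ 2 := by
  obtain ⟨C, hC, hlarge⟩ := hp.exists_trigEnergy_mul_envelope_sq_le ha hb hc
  have hcont (n : ℕ) : ContinuousOn (fun θ ↦ trigEnergy (max (n : ℝ) 1) (p n) θ *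
      jacobiEnvelope (a + 1 / 2) (b + 1 / 2) (1 / max (n : ℝ) 1) θ ^ 2 / max (n : ℝ) 1 ^ 2)
      (Icc 0 π) :=
    (((continuous_trigEnergy _ _).mul ((continuous_jacobiEnvelope (by linarith) (by linarith)
      _).pow 2)).div_const _).continuousOn
  obtain ⟨C', hC', hall⟩ := exists_forall_le_of_eventually_le isCompact_Icc hcont
    (C := (√(a + b + 2) ^ (a + b + 1)) ^ 2 * (C * (a + b + 2))) <| by
      filter_upwards [hlarge, eventually_ge_atTop 1] with n hle hn θ hθ
      have hn' : (1 : ℝ) ≤ n := by exact_mod_cast hn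
      rw [max_eq_left hn', div_le_iff₀ (by positivity)]
      exact trigEnergy_mul_envelope_sq_le ha hb hn hC.le hθ (hle θ hθ)
  exact ⟨C', hC', fun n θ hθ ↦ (div_le_iff₀ (by positivity)).1 (hall n θ hθ)⟩

lemma exists_abs_eval_mul_envelope_le (ha : -(1 / 2) ≤ a) (hb : -(1 / 2) ≤ b) (hc : 0 < c)
    (hp : IsONPS (jacobiWeight c a b) p) :
    ∃ B, 0 < B ∧ ∀ n : ℕ, 1 ≤ n → ∀ θ ∈ Icc 0 π,
      (∀ k ≤ n, |(p k).eval (cos θ)| * jacobiEnvelope (a + 1 / 2) (b + 1 / 2) (1 / n) θ ≤ B) ∧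
      |sin θ * (derivative (p n)).eval (cos θ)| *
        jacobiEnvelope (a + 1 / 2) (b + 1 / 2) (1 / n) θ ≤ B * n := by
  obtain ⟨C, hC, henergy⟩ := hp.exists_trigEnergy_mul_envelope_sq_le_sq ha hb hc
  refine ⟨√C, sqrt_pos.2 hC, fun n hn θ hθ ↦ ⟨fun k hk ↦ ?_, ?_⟩⟩
  · set N : ℝ := max k 1
    have hN : 0 < N := by positivity
    have hNn : N ≤ n := max_le (by exact_mod_cast hk) (by exact_mod_cast hn)
    have henv := jacobiEnvelope_mono (ν := a + 1 / 2) (μ := b + 1 / 2) (by linarith)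
      (by linarith) (by positivity) (one_div_le_one_div_of_le hN hNn) hθ
    refine (mul_le_mul_of_nonneg_left henv (abs_nonneg _)).trans (le_sqrt_of_sq_le ?_)
    have hle := (mul_le_mul_of_nonneg_right (sq_mul_eval_sq_le_trigEnergy N (p k) θ)
      (sq_nonneg _)).trans (henergy k θ hθ)
    rw [mul_assoc, mul_comm C] at hle
    rw [mul_pow, sq_abs]
    exact le_of_mul_le_mul_left hle (by positivity)
  · have hn' : (1 : ℝ) ≤ n := by exact_mod_cast hn
    have hle := henergy n θ hθ
    rw [max_eq_left hn'] at hle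
    rw [← sqrt_sq (zero_le_one.trans hn'), ← sqrt_mul hC.le]
    refine le_sqrt_of_sq_le ?_
    rw [mul_pow, sq_abs, sqrt_sq (zero_le_one.trans hn')]
    exact (mul_le_mul_of_nonneg_right (sq_sin_mul_eval_derivative_le_trigEnergy n (p n) θ)
      (sq_nonneg _)).trans hle

end IsONPS

end PointwiseBounds

section Kernel
open Polynomial

lemma abs_cos_sub_cos {θ φ : ℝ} (hθ : θ ∈ Icc 0 π) (hφ : φ ∈ Icc 0 π) :
    |cos θ - cos φ| = 2 * sin ((θ + φ) / 2) * |sin ((θ - φ) / 2)| := by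
  have : 0 ≤ sin ((θ + φ) / 2) :=
    sin_nonneg_of_nonneg_of_le_pi (by linarith [hθ.1, hφ.1]) (by linarith [hθ.2, hφ.2])
  rw [cos_sub_cos, abs_mul, abs_mul, abs_neg, abs_two, abs_of_nonneg this]

lemma sin_half_add_pos {θ φ : ℝ} (hθ : θ ∈ Icc 0 π) (hφ : φ ∈ Icc 0 π) (hne : θ ≠ φ) :
    0 < sin ((θ + φ) / 2) := by
  refine sin_pos_of_pos_of_lt_pi ?_ ?_
  · by_contra! hle
    exact hne (by linarith [hθ.1, hφ.1])
  · by_contra! hge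
    exact hne (by linarith [hθ.2, hφ.2])

lemma sin_add_sin_le {θ φ : ℝ} (hθ : θ ∈ Icc 0 π) (hφ : φ ∈ Icc 0 π) :
    sin θ + sin φ ≤ 2 * sin ((θ + φ) / 2) := by
  have : 0 ≤ sin ((θ + φ) / 2) :=
    sin_nonneg_of_nonneg_of_le_pi (by linarith [hθ.1, hφ.1]) (by linarith [hθ.2, hφ.2])
  rw [sin_add_sin]
  exact mul_le_of_le_one_right (by positivity) (cos_le_one _)

lemma abs_sub_le_pi_mul_abs_sin {θ φ : ℝ} (hθ : θ ∈ Icc 0 π) (hφ : φ ∈ Icc 0 π) :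
    |θ - φ| ≤ π * |sin ((θ - φ) / 2)| := by
  have := mul_abs_le_abs_sin (x := (θ - φ) / 2)
    (abs_le.2 ⟨by linarith [hθ.1, hφ.2], by linarith [hθ.2, hφ.1]⟩)
  rw [abs_div, abs_two, div_mul_div_comm, mul_comm π, mul_div_mul_left _ _ two_ne_zero,
    div_le_iff₀ pi_pos] at this
  rwa [mul_comm]

variable {a b : ℝ} {L : ℝ[X] →ₗ[ℝ] ℝ} {p : ℕ → ℝ[X]}


lemma abs_cos_sub_cos_mul_abs_kernel_le (h : IsOrthonormalSequence L p)
    (hL : ∀ r, L (pearsonOp a b r) = 0) (hab : 0 ≤ a + b + 1) (n : ℕ) {θ φ : ℝ}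
    (hθ : θ ∈ Icc 0 π) (hφ : φ ∈ Icc 0 π) :
    (2 * n + a + b + 1) * (|cos θ - cos φ| * |CDK p n (cos θ) (cos φ)|) ≤
      sin φ * |sin φ * (derivative (p n)).eval (cos φ)| * |(p n).eval (cos θ)| +
        sin θ * |sin θ * (derivative (p n)).eval (cos θ)| * |(p n).eval (cos φ)| +
        (n + a + b + 1) * |cos θ - cos φ| *
          (|(p n).eval (cos θ)| * |(p n).eval (cos φ)|) := by
  have hcoeff : 0 ≤ 2 * n + a + b + 1 := by linarith [n.cast_nonneg (α := ℝ)]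
  have hcoeff' : 0 ≤ n + a + b + 1 := by linarith [n.cast_nonneg (α := ℝ)]
  have hCD := congrArg abs (h.christoffel_darboux_derivative hL (cos θ) (cos φ) n)
  rw [abs_mul, abs_mul, abs_of_nonneg hcoeff, ← sin_sq, ← sin_sq] at hCD
  refine hCD.trans_le ((abs_add_le _ _).trans (add_le_add ((abs_sub _ _).trans_eq ?_) ?_))
  · simp only [abs_mul, abs_pow, abs_of_nonneg (sin_nonneg_of_mem_Icc hθ),
      abs_of_nonneg (sin_nonneg_of_mem_Icc hφ)]
    ring
  · simp only [abs_mul, abs_of_nonneg hcoeff', le_refl]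

lemma abs_cos_sub_cos_mul_abs_kernel_mul_le (h : IsOrthonormalSequence L p)
    (hL : ∀ r, L (pearsonOp a b r) = 0) (hab : 0 ≤ a + b + 1) {n : ℕ} {θ φ : ℝ}
    (hθ : θ ∈ Icc 0 π) (hφ : φ ∈ Icc 0 π) {A A' B : ℝ} (hA : 0 ≤ A) (hA' : 0 ≤ A')
    (hpθ : |(p n).eval (cos θ)| * A ≤ B) (hpφ : |(p n).eval (cos φ)| * A' ≤ B)
    (hdθ : |sin θ * (derivative (p n)).eval (cos θ)| * A ≤ B * n)
    (hdφ : |sin φ * (derivative (p n)).eval (cos φ)| * A' ≤ B * n) :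
    (2 * n + a + b + 1) * (|cos θ - cos φ| * (|CDK p n (cos θ) (cos φ)| * (A * A'))) ≤
      ((sin θ + sin φ) * n + (n + a + b + 1) * |cos θ - cos φ|) * B ^ 2 := by
  have hcoeff : 0 ≤ n + a + b + 1 := by linarith [n.cast_nonneg (α := ℝ)]
  have hsθ := sin_nonneg_of_mem_Icc hθ
  have hsφ := sin_nonneg_of_mem_Icc hφ
  have hB : 0 ≤ B := (by positivity : (0 : ℝ) ≤ _).trans hpθ
  have hkernel := abs_cos_sub_cos_mul_abs_kernel_le h hL hab n hθ hφ
  set δ := |cos θ - cos φ|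
  set K := |CDK p n (cos θ) (cos φ)|
  set P := |(p n).eval (cos θ)|
  set Q := |(p n).eval (cos φ)|
  set P' := |sin θ * (derivative (p n)).eval (cos θ)|
  set Q' := |sin φ * (derivative (p n)).eval (cos φ)|
  calc (2 * n + a + b + 1) * (δ * (K * (A * A')))
      = (2 * n + a + b + 1) * (δ * K) * (A * A') := by ring
    _ ≤ (sin φ * Q' * P + sin θ * P' * Q + (n + a + b + 1) * δ * (P * Q)) * (A * A') := by gcongr
    _ = sin φ * (Q' * A' * (P * A)) + sin θ * (P' * A * (Q * A')) +
          (n + a + b + 1) * δ * (P * A * (Q * A')) := by ring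
    _ ≤ sin φ * (B * n * B) + sin θ * (B * n * B) + (n + a + b + 1) * δ * (B * B) := by gcongr
    _ = _ := by ring

lemma abs_sin_mul_abs_kernel_mul_le (h : IsOrthonormalSequence L p)
    (hL : ∀ r, L (pearsonOp a b r) = 0) (hab : 0 ≤ a + b + 1) {n : ℕ} (hn : 1 ≤ n) {θ φ : ℝ}
    (hθ : θ ∈ Icc 0 π) (hφ : φ ∈ Icc 0 π) {A A' B : ℝ} (hA : 0 ≤ A) (hA' : 0 ≤ A')
    (hpθ : |(p n).eval (cos θ)| * A ≤ B) (hpφ : |(p n).eval (cos φ)| * A' ≤ B)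
    (hdθ : |sin θ * (derivative (p n)).eval (cos θ)| * A ≤ B * n)
    (hdφ : |sin φ * (derivative (p n)).eval (cos φ)| * A' ≤ B * n) :
    |sin ((θ - φ) / 2)| * (|CDK p n (cos θ) (cos φ)| * (A * A')) ≤ B ^ 2 := by
  rcases eq_or_ne θ φ with rfl | hne
  · simpa using sq_nonneg B
  have hn0 : (0 : ℝ) < n := by exact_mod_cast hn
  have hcoeff : 0 ≤ n + a + b + 1 := by linarith
  have hcoeff' : 0 < 2 * n + a + b + 1 := by linarith
  have hS := sin_half_add_pos hθ hφ hne
  have hkernel := abs_cos_sub_cos_mul_abs_kernel_mul_le h hL hab hθ hφ hA hA' hpθ hpφ hdθ hdφ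
  rw [abs_cos_sub_cos hθ hφ] at hkernel
  set S := sin ((θ + φ) / 2)
  refine le_of_mul_le_mul_left ?_ (mul_pos hcoeff' (mul_pos two_pos hS))
  calc _ = _ := by ring
    _ ≤ ((sin θ + sin φ) * n + (n + a + b + 1) * (2 * S * |sin ((θ - φ) / 2)|)) * B ^ 2 := hkernel
    _ ≤ (2 * S * n + (n + a + b + 1) * (2 * S * 1)) * B ^ 2 := by
        gcongr
        · exact sin_add_sin_le hθ hφ
        · exact abs_sin_le_one _
    _ = _ := by ring

lemma abs_kernel_mul_le {n : ℕ} {x y A A' B : ℝ} (hA : 0 ≤ A) (hA' : 0 ≤ A')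
    (hx : ∀ k ≤ n, |(p k).eval x| * A ≤ B) (hy : ∀ k ≤ n, |(p k).eval y| * A' ≤ B) :
    |CDK p n x y| * (A * A') ≤ (n + 1) * B ^ 2 := by
  have hB : 0 ≤ B := (by positivity : (0 : ℝ) ≤ _).trans (hx 0 n.zero_le)
  calc |CDK p n x y| * (A * A')
      ≤ (∑ k ∈ Finset.range (n + 1), |(p k).eval x * (p k).eval y|) * (A * A') := by
        gcongr
        exact Finset.abs_sum_le_sum_abs _ _
    _ = ∑ k ∈ Finset.range (n + 1), |(p k).eval x| * A * (|(p k).eval y| * A') := by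
        rw [Finset.sum_mul]
        exact Finset.sum_congr rfl fun k _ ↦ by rw [abs_mul]; ring
    _ ≤ ∑ _k ∈ Finset.range (n + 1), B * B := by
        refine Finset.sum_le_sum fun k hk ↦ ?_
        have hk' := Finset.mem_range_succ_iff.1 hk
        exact mul_le_mul (hx k hk') (hy k hk') (by positivity) hB
    _ = (n + 1) * B ^ 2 := by simp [sq]

theorem IsONPS.exists_abs_kernel_mul_envelope_le {c : ℝ} (ha : -(1 / 2) ≤ a)
    (hb : -(1 / 2) ≤ b) (hc : 0 < c) (hp : IsONPS (jacobiWeight c a b) p) :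
    ∃ K, 0 < K ∧ ∀ n : ℕ, 1 ≤ n → ∀ θ ∈ Icc 0 π, ∀ φ ∈ Icc 0 π,
      |CDK p n (cos θ) (cos φ)| * (jacobiEnvelope (a + 1 / 2) (b + 1 / 2) (1 / n) θ *
        jacobiEnvelope (a + 1 / 2) (b + 1 / 2) (1 / n) φ) * (|θ - φ| + 1 / n) ≤ K := by
  obtain ⟨B, hB, hbound⟩ := hp.exists_abs_eval_mul_envelope_le ha hb hc
  refine ⟨(π + 2) * B ^ 2, by positivity, fun n hn θ hθ φ hφ ↦ ?_⟩
  obtain ⟨hpθ, hdθ⟩ := hbound n hn θ hθ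
  obtain ⟨hpφ, hdφ⟩ := hbound n hn φ hφ
  have hn' : (1 : ℝ) ≤ n := by exact_mod_cast hn
  have hn0 : (0 : ℝ) < n := by linarith
  have hA := (jacobiEnvelope_pos (ν := a + 1 / 2) (μ := b + 1 / 2) (one_div_pos.2 hn0) hθ).le
  have hA' := (jacobiEnvelope_pos (ν := a + 1 / 2) (μ := b + 1 / 2) (one_div_pos.2 hn0) hφ).le
  have hoff := abs_sin_mul_abs_kernel_mul_le hp.isOrthonormalSequence
    (momentFunctional_pearsonOp (by linarith) (by linarith) hp.integrableOn) (by linarith) hn hθ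
    hφ hA hA' (hpθ n le_rfl) (hpφ n le_rfl) hdθ hdφ
  have hdiag := abs_kernel_mul_le hA hA' hpθ hpφ
  set E := |CDK p n (cos θ) (cos φ)| * (jacobiEnvelope (a + 1 / 2) (b + 1 / 2) (1 / n) θ *
    jacobiEnvelope (a + 1 / 2) (b + 1 / 2) (1 / n) φ)
  have : 0 ≤ E := by positivity
  calc E * (|θ - φ| + 1 / n)
      ≤ E * (π * |sin ((θ - φ) / 2)| + 1 / n) := by
        gcongr
        exact abs_sub_le_pi_mul_abs_sin hθ hφ
    _ = π * (|sin ((θ - φ) / 2)| * E) + E * (1 / n) := by ring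
    _ ≤ π * B ^ 2 + (n + 1) * B ^ 2 * (1 / n) := by gcongr
    _ ≤ π * B ^ 2 + 2 * n * B ^ 2 * (1 / n) := by gcongr; linarith
    _ = (π + 2) * B ^ 2 := by field_simp

end Kernel

section Comparison

lemma mul_add_mul_add_sq_le {s t d ε : ℝ} (hs : 0 ≤ s) (ht : 0 ≤ t) (hε : 0 ≤ ε)
    (hd : d ≤ π * (s + t)) : s * t + d * ε + ε ^ 2 ≤ π * ((s + ε) * (t + ε)) := by
  have : 1 ≤ π := by linarith [pi_gt_three]
  calc s * t + d * ε + ε ^ 2 ≤ 1 * (s * t) + π * (s + t) * ε + 1 * ε ^ 2 := by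
        rw [one_mul, one_mul]
        gcongr
    _ ≤ π * (s * t) + π * (s + t) * ε + π * ε ^ 2 := by gcongr
    _ = π * ((s + ε) * (t + ε)) := by ring

lemma abs_sub_le_pi_mul_sin_half_add {θ φ : ℝ} (hθ : θ ∈ Icc 0 π) (hφ : φ ∈ Icc 0 π) :
    |θ - φ| ≤ π * (sin (θ / 2) + sin (φ / 2)) := by
  have h₁ := le_pi_mul_sin_half hθ
  have h₂ := le_pi_mul_sin_half hφ
  rw [abs_le]
  constructor <;> linarith [hθ.1, hφ.1]

lemma abs_sub_le_pi_mul_cos_half_add {θ φ : ℝ} (hθ : θ ∈ Icc 0 π) (hφ : φ ∈ Icc 0 π) :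
    |θ - φ| ≤ π * (cos (θ / 2) + cos (φ / 2)) := by
  simpa only [sin_half_pi_sub, sub_sub_sub_cancel_left, abs_sub_comm φ θ] using
    abs_sub_le_pi_mul_sin_half_add (pi_sub_mem_Icc hθ) (pi_sub_mem_Icc hφ)

lemma rpow_mul_rpow_le_envelope_mul_envelope {ν μ ε θ φ : ℝ} (hν : 0 ≤ ν) (hμ : 0 ≤ μ)
    (hε : 0 ≤ ε) (hθ : θ ∈ Icc 0 π) (hφ : φ ∈ Icc 0 π) :
    (sin (θ / 2) * sin (φ / 2) + |θ - φ| * ε + ε ^ 2) ^ ν *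
        (cos (θ / 2) * cos (φ / 2) + |θ - φ| * ε + ε ^ 2) ^ μ ≤
      π ^ (ν + μ) * (jacobiEnvelope ν μ ε θ * jacobiEnvelope ν μ ε φ) := by
  have hs := sin_half_nonneg hθ
  have hs' := sin_half_nonneg hφ
  have hc := cos_half_nonneg hθ
  have hc' := cos_half_nonneg hφ
  have hπ := pi_pos
  calc _ ≤ (π * ((sin (θ / 2) + ε) * (sin (φ / 2) + ε))) ^ ν *
        (π * ((cos (θ / 2) + ε) * (cos (φ / 2) + ε))) ^ μ := by
        gcongr
        · exact mul_add_mul_add_sq_le hs hs' hε (abs_sub_le_pi_mul_sin_half_add hθ hφ)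
        · exact mul_add_mul_add_sq_le hc hc' hε (abs_sub_le_pi_mul_cos_half_add hθ hφ)
    _ = _ := by
        rw [mul_rpow hπ.le (by positivity), mul_rpow hπ.le (by positivity),
          mul_rpow (by positivity) (by positivity), mul_rpow (by positivity) (by positivity),
          rpow_add hπ, jacobiEnvelope, jacobiEnvelope]
        ring

lemma rpow_mul_rpow_le_envelope_mul_envelope_mul {α β i j ε θ φ : ℝ} (hi : 0 ≤ i) (hj : 0 ≤ j)
    (hα : 0 ≤ α + i + 1 / 2) (hβ : 0 ≤ β + j + 1 / 2) (hε : 0 < ε) (hθ : θ ∈ Icc 0 π)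
    (hφ : φ ∈ Icc 0 π) :
    (sin (θ / 2) * sin (φ / 2)) ^ i * (cos (θ / 2) * cos (φ / 2)) ^ j ≤
      π ^ (α + i + 1 / 2 + (β + j + 1 / 2)) *
        (jacobiEnvelope (α + i + 1 / 2) (β + j + 1 / 2) ε θ *
          jacobiEnvelope (α + i + 1 / 2) (β + j + 1 / 2) ε φ) *
        ((sin (θ / 2) * sin (φ / 2) + |θ - φ| * ε + ε ^ 2) ^ (-α - 1 / 2) *
          (cos (θ / 2) * cos (φ / 2) + |θ - φ| * ε + ε ^ 2) ^ (-β - 1 / 2)) := by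
  have hs := mul_nonneg (sin_half_nonneg hθ) (sin_half_nonneg hφ)
  have hc := mul_nonneg (cos_half_nonneg hθ) (cos_half_nonneg hφ)
  have hd : 0 ≤ |θ - φ| * ε := by positivity
  have hXY := rpow_mul_rpow_le_envelope_mul_envelope hα hβ hε.le hθ hφ
  set X := sin (θ / 2) * sin (φ / 2) + |θ - φ| * ε + ε ^ 2
  set Y := cos (θ / 2) * cos (φ / 2) + |θ - φ| * ε + ε ^ 2
  have hX : 0 < X := by positivity
  have hY : 0 < Y := by positivity
  calc (sin (θ / 2) * sin (φ / 2)) ^ i * (cos (θ / 2) * cos (φ / 2)) ^ j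
      ≤ X ^ i * Y ^ j := by
        gcongr <;> linarith [sq_nonneg ε]
    _ = X ^ (α + i + 1 / 2) * Y ^ (β + j + 1 / 2) * (X ^ (-α - 1 / 2) * Y ^ (-β - 1 / 2)) := by
        rw [mul_mul_mul_comm, ← rpow_add hX, ← rpow_add hY]
        ring_nf
    _ ≤ _ := by gcongr

end Comparison

theorem stmt_13_general {α β i j : ℝ} (hi : 0 ≤ i) (hj : 0 ≤ j) (hα : -(1 / 2) ≤ α + i)
    (hβ : -(1 / 2) ≤ β + j) {c' : ℝ} (hc' : 0 < c') {p : ℕ → Polynomial ℝ}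
    (hp : IsONPS (fun x => c' * (1 - x) ^ (α + i) * (1 + x) ^ (β + j)) p) :
    ∃ c : ℝ, 0 < c ∧ ∀ n : ℕ, 1 ≤ n → ∀ θ φ : ℝ, θ ∈ Icc (0:ℝ) π → φ ∈ Icc (0:ℝ) π →
      |(sin (θ / 2) * sin (φ / 2)) ^ i * (cos (θ / 2) * cos (φ / 2)) ^ j
          * CDK p n (cos θ) (cos φ)|
        ≤ c * (sin (θ / 2) * sin (φ / 2) + |θ - φ| / n + 1 / (n : ℝ) ^ 2) ^ (-α - 1 / 2)
            * (cos (θ / 2) * cos (φ / 2) + |θ - φ| / n + 1 / (n : ℝ) ^ 2) ^ (-β - 1 / 2)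
            / (|θ - φ| + 1 / n) := by
  obtain ⟨K, hK, hkernel⟩ := IsONPS.exists_abs_kernel_mul_envelope_le hα hβ hc' hp
  refine ⟨π ^ (α + i + 1 / 2 + (β + j + 1 / 2)) * K, by positivity, fun n hn θ φ hθ hφ ↦ ?_⟩
  have hn0 : (0 : ℝ) < n := by exact_mod_cast hn
  have hs := mul_nonneg (sin_half_nonneg hθ) (sin_half_nonneg hφ)
  have hc := mul_nonneg (cos_half_nonneg hθ) (cos_half_nonneg hφ)
  replace hkernel := hkernel n hn θ hθ φ hφ
  have hweight := rpow_mul_rpow_le_envelope_mul_envelope_mul hi hj (neg_le_iff_add_nonneg.1 hα)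
    (neg_le_iff_add_nonneg.1 hβ) (one_div_pos.2 hn0) hθ hφ
  simp only [mul_one_div, one_div_pow] at hweight
  set E := jacobiEnvelope (α + i + 1 / 2) (β + j + 1 / 2) (1 / n) θ *
    jacobiEnvelope (α + i + 1 / 2) (β + j + 1 / 2) (1 / n) φ
  set R := (sin (θ / 2) * sin (φ / 2) + |θ - φ| / n + 1 / (n : ℝ) ^ 2) ^ (-α - 1 / 2) *
    (cos (θ / 2) * cos (φ / 2) + |θ - φ| / n + 1 / (n : ℝ) ^ 2) ^ (-β - 1 / 2) with hR
  rw [le_div_iff₀ (by positivity), abs_mul, abs_of_nonneg (by positivity), mul_assoc (_ * K), ← hR]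
  calc _ ≤ π ^ (α + i + 1 / 2 + (β + j + 1 / 2)) * E * R * |CDK p n (cos θ) (cos φ)| *
        (|θ - φ| + 1 / n) := by gcongr
    _ = π ^ (α + i + 1 / 2 + (β + j + 1 / 2)) *
        (|CDK p n (cos θ) (cos φ)| * E * (|θ - φ| + 1 / n)) * R := by ring
    _ ≤ π ^ (α + i + 1 / 2 + (β + j + 1 / 2)) * K * R := by gcongr

/-- sharp pointwise upper bound for the kernels
`k_n^{(α,β),i,j}(cos θ, cos φ)`. -/
theorem stmt_13
    (α β : ℝ) (hα : -(1/2 : ℝ) ≤ α) (hβ : -(1/2 : ℝ) ≤ β)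
    (i j : ℝ) (hi : 0 ≤ i) (hj : 0 ≤ j)
    (c' : ℝ) (hc'p : 0 < c')
    (hc' : (∫ x in Icc (-1:ℝ) 1, c' * (1 - x) ^ (α + i) * (1 + x) ^ (β + j)) = 1)
    (p : ℕ → Polynomial ℝ)
    (hp : IsONPS (fun x => c' * (1 - x) ^ (α + i) * (1 + x) ^ (β + j)) p) :
    ∃ c : ℝ, 0 < c ∧ ∀ n : ℕ, 1 ≤ n → ∀ θ φ : ℝ, θ ∈ Icc (0:ℝ) π → φ ∈ Icc (0:ℝ) π →
      |(Real.sin (θ/2) * Real.sin (φ/2)) ^ i * (Real.cos (θ/2) * Real.cos (φ/2)) ^ j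
          * CDK p n (Real.cos θ) (Real.cos φ)|
        ≤ c * (Real.sin (θ/2) * Real.sin (φ/2) + |θ - φ| / n + 1 / (n:ℝ)^2) ^ (-α - 1/2)
            * (Real.cos (θ/2) * Real.cos (φ/2) + |θ - φ| / n + 1 / (n:ℝ)^2) ^ (-β - 1/2)
            / (|θ - φ| + 1 / n) :=
  stmt_13_general hi hj (by linarith) (by linarith) hc'p hp
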